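/- Let d ≥ 4 and let D be the edge set of the complete bipartite graph K_{d+2,d+3} with sides X (|X| = d+2) and Y = {y_1,…,y_{d+3}}. Then D is a double (2-fold) R_d-circuit; its principal partition is {A_1,…,A_{d+3}}, where A_i is the set of edges of D incident to y_i (so D ∖ A_i is the edge set of a copy of K_{d+2,d+2}); and r_d(⋂_{i=1}^{d+3} cl_d(D ∖ A_i)) = 0 < d+1 = (d+3) − 2, so D is not balanced. Consequently, for every k ≥ 2, the union of D with the edge sets of k−2 complete graphs K_{d+2} that are pairwise vertex-disjoint and vertex-disjoint from K_{d+2,d+3} is a k-fold R_d-circuit that is not balanced; in particular, the generic d-dimensional rigidity matroid does not satisfy the k-fold circuit property for any d ≥ 4 and k ≥ 2. -/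

import Mathlib

open scoped BigOperators

/-- The row of the `d`-dimensional rigidity matrix of a realisation `p : V → ℝ^d`
indexed by the (unordered) edge `e`. -/
noncomputable def rigRow (d : ℕ) {V : Type*} [DecidableEq V]
    (p : V → Fin d → ℝ) (e : Sym2 V) : V × Fin d → ℝ :=
  Sym2.lift
    ⟨fun u v wi =>
        (((if wi.1 = u then (1 : ℝ) else 0) - (if wi.1 = v then (1 : ℝ) else 0)) *
          (p u wi.2 - p v wi.2)),
      fun u v => by funext wi; ring⟩ e

/-- A realisation is generic if the coordinates of the points form an algebraically
independent set over `ℚ`. -/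
def Generic (d : ℕ) {V : Type*} (p : V → Fin d → ℝ) : Prop :=
  AlgebraicIndependent ℚ fun vi : V × Fin d => p vi.1 vi.2

/-- `rrk d p F` : the rank of the set of rows of the rigidity matrix of `(K_V, p)`
indexed by the edges in `F`.  For generic `p` this is the rank function `r_d` of
the generic `d`-dimensional rigidity matroid. -/
noncomputable def rrk (d : ℕ) {V : Type*} [Fintype V] [DecidableEq V]
    (p : V → Fin d → ℝ) (F : Set (Sym2 V)) : ℕ :=
  Module.finrank ℝ (Submodule.span ℝ (rigRow d p '' F))

/-- `D` is a `k`-fold circuit (with respect to the realisation `p`) :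
`r (D \ {f}) = r D` for every `f ∈ D`, and `r D = |D| - k`. -/
def IsKFoldCircuit (d : ℕ) {V : Type*} [Fintype V] [DecidableEq V]
    (p : V → Fin d → ℝ) (D : Finset (Sym2 V)) (k : ℕ) : Prop :=
  (∀ f ∈ D, rrk d p (↑D \ {f}) = rrk d p ↑D) ∧ rrk d p ↑D + k = D.card

/-- An `R_d`-circuit: `r C = |C| - 1` and `r (C \ {f}) = r C` for all `f ∈ C`. -/
def IsCircuit (d : ℕ) {V : Type*} [Fintype V] [DecidableEq V]
    (p : V → Fin d → ℝ) (C : Finset (Sym2 V)) : Prop :=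
  IsKFoldCircuit d p C 1

/-- `A` is a part of the principal partition of the `k`-fold circuit `D`:
the parts are the sets `D \ B` where `B` runs over the `(k-1)`-fold circuits
contained in `D`. -/
def IsPrincipalPart (d : ℕ) {V : Type*} [Fintype V] [DecidableEq V]
    (p : V → Fin d → ℝ) (D : Finset (Sym2 V)) (k : ℕ) (A : Finset (Sym2 V)) : Prop :=
  ∃ B ⊆ D, IsKFoldCircuit d p B (k - 1) ∧ A = D \ B

/-- Closure in the rigidity matroid: all edges of `K_V` whose addition to `F`
does not increase the rank. -/
def rcl (d : ℕ) {V : Type*} [Fintype V] [DecidableEq V]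
    (p : V → Fin d → ℝ) (F : Set (Sym2 V)) : Set (Sym2 V) :=
  {e | ¬ e.IsDiag ∧ rrk d p (insert e F) = rrk d p F}

/-- A `k`-fold circuit `D` with principal partition `A_1, …, A_ℓ` is balanced if
`r_d (⋂ i, cl_d (D \ A_i)) = ℓ - k`. -/
def IsBalanced (d : ℕ) {V : Type*} [Fintype V] [DecidableEq V]
    (p : V → Fin d → ℝ) (D : Finset (Sym2 V)) (k : ℕ) : Prop :=
  rrk d p (⋂ A ∈ {A | IsPrincipalPart d p D k A}, rcl d p ↑(D \ A)) + k =
    Set.ncard {A | IsPrincipalPart d p D k A}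

/-- A vertex is monochromatic if all edges of `D` incident with it lie in a single
part of the principal partition (and technicolour otherwise). -/
def Monochromatic (d : ℕ) {V : Type*} [Fintype V] [DecidableEq V]
    (p : V → Fin d → ℝ) (D : Finset (Sym2 V)) (k : ℕ) (w : V) : Prop :=
  ∃ A, IsPrincipalPart d p D k A ∧ ∀ e ∈ D, w ∈ e → e ∈ A

/-- The graph `(W, E)` is `R_d`-rigid: it is a complete graph on at most `d+1`
vertices, or `r_d(E) = d|W| - (d+1 choose 2)`. -/
def IsRigidOn (d : ℕ) {V : Type*} [Fintype V] [DecidableEq V]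
    (p : V → Fin d → ℝ) (W : Finset V) (E : Finset (Sym2 V)) : Prop :=
  (W.card ≤ d + 1 ∧ ∀ u ∈ W, ∀ w ∈ W, u ≠ w → s(u, w) ∈ E) ∨
    (rrk d p ↑E : ℤ) + ((d + 1).choose 2 : ℤ) = (d : ℤ) * (W.card : ℤ)

/-- The edge set of the cone of (the graph with edge set) `D` over a new vertex,
realised as `none : Option V`. -/
def coneEdges {V : Type*} [Fintype V] [DecidableEq V] (D : Finset (Sym2 V)) :
    Finset (Sym2 (Option V)) :=
  D.image (Sym2.map Option.some) ∪
    Finset.univ.image fun u : V => s((Option.some u : Option V), (none : Option V))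

/-- The degree of the vertex `w` in the edge set `D`. -/
def degIn {V : Type*} [Fintype V] [DecidableEq V] (D : Finset (Sym2 V)) (w : V) : ℕ :=
  (D.filter fun e => w ∈ e).card

/-- The set of vertices incident with an edge of `F`. -/
def esupp {V : Type*} [Fintype V] [DecidableEq V] (F : Finset (Sym2 V)) : Finset V :=
  Finset.univ.filter fun w => ∃ e ∈ F, w ∈ e

/-- The vertex set: sides `X` (size `d+2`) and `Y` (size `d+3`) of `K_{d+2,d+3}`,
together with `k-2` disjoint copies of the vertex set of `K_{d+2}`. -/
abbrev BipV (d k : ℕ) : Type := (Fin (d+2) ⊕ Fin (d+3)) ⊕ (Fin (k-2) × Fin (d+2))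

def xv (d k : ℕ) (i : Fin (d+2)) : BipV d k := Sum.inl (Sum.inl i)
def yv (d k : ℕ) (j : Fin (d+3)) : BipV d k := Sum.inl (Sum.inr j)
def zv (d k : ℕ) (c : Fin (k-2)) (a : Fin (d+2)) : BipV d k := Sum.inr (c, a)

/-- The edge set of `K_{d+2,d+3}`. -/
def bipEdges (d k : ℕ) : Finset (Sym2 (BipV d k)) :=
  (Finset.univ ×ˢ Finset.univ).image fun t : Fin (d+2) × Fin (d+3) => s(xv d k t.1, yv d k t.2)

/-- `A_j` : the edges of `K_{d+2,d+3}` incident with `y_j`. -/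
def starAt (d k : ℕ) (j : Fin (d+3)) : Finset (Sym2 (BipV d k)) :=
  Finset.univ.image fun i : Fin (d+2) => s(xv d k i, yv d k j)

/-- The edge sets of `k-2` pairwise vertex-disjoint copies of `K_{d+2}`, all
vertex-disjoint from `K_{d+2,d+3}`. -/
def cliqueEdgesZ (d k : ℕ) : Finset (Sym2 (BipV d k)) :=
  ((Finset.univ : Finset (Fin (k-2) × Fin (d+2) × Fin (d+2))).filter
      fun t => t.2.1 ≠ t.2.2).image fun t => s(zv d k t.1 t.2.1, zv d k t.1 t.2.2)

/-!
The row dependences of the rigidity matrix are the equilibrium stresses: edge weights `ω` with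
`∑ u, ω s(w, u) • h u = (∑ u, ω s(w, u)) • h w` for all `w`, where `h` denotes homogeneous
coordinates. A set `D` is a `k`-fold circuit if and only if its stress space has dimension `k` and
no edge of `D` is unstressed.

For a stress of `K_{X,Y}`, possibly with one extra edge inside `X`, pairing the condition at `w`
with `h w` and subtracting the sum over `Y` from the sum over `X` yields a linear relation between
the vertex sums `∑ u, ω s(w, u)` and the coefficient of the extra edge, with values in the space of
quadrics. As `|X| + |Y| < (d + 2).choose 2`, which for `(d + 2, d + 3)` means `d ≥ 4`, this relation
is trivial at generic points (Bolker and Roth). Hence no edge inside a side enters the closure, and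
every row of a stress of `K_{X,Y}` is an affine dependence of `X` or of `Y`. When `|X| = d + 2`,
the set `X` has a unique dependence `a`, and the stresses are the products of `a` with the
dependences of `Y`. The multiple circuits inside `K_{X,Y}` are therefore the `K_{X,S}` with `S ⊆ Y`,
and the closures of the `K_{X,Y ∖ {y}}` have no edge in common.

A vertex-disjoint `K_{d+2}` contributes one stress and one part to the principal partition, and
leaves the intersection of closures empty.
-/

section LinearRelations

variable (K : Type*) {M ι : Type*} [DivisionRing K] [AddCommGroup M] [Module K M] [Fintype ι]

/-- The space of linear relations `∑ i, c i • v i = 0` among the vectors `v i` whose coefficient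
families `c` are supported on `F`. The coefficients are indexed by all of `ι`, so that the spaces
for different `F` live in one module. -/
def relationSpace (v : ι → M) (F : Set ι) : Submodule K (ι → K) :=
  Submodule.pi Fᶜ (fun _ => ⊥) ⊓ LinearMap.ker (Fintype.linearCombination K v)

variable {K} {v : ι → M}

lemma mem_relationSpace {F : Set ι} {c : ι → K} :
    c ∈ relationSpace K v F ↔ (∀ i ∉ F, c i = 0) ∧ ∑ i, c i • v i = 0 := by
  simp [relationSpace, Submodule.mem_pi, Fintype.linearCombination_apply]

lemma relationSpace_mono {F G : Set ι} (h : F ⊆ G) : relationSpace K v F ≤ relationSpace K v G :=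
  fun _ hc => mem_relationSpace.2
    ⟨fun i hi => (mem_relationSpace.1 hc).1 i fun hF => hi (h hF), (mem_relationSpace.1 hc).2⟩

lemma disjoint_relationSpace {F G : Set ι} (h : Disjoint F G) :
    Disjoint (relationSpace K v F) (relationSpace K v G) := by
  refine Submodule.disjoint_def.2 fun _ hF hG => funext fun i => ?_
  by_cases hi : i ∈ F
  · exact (mem_relationSpace.1 hG).1 i (Set.disjoint_left.1 h hi)
  · exact (mem_relationSpace.1 hF).1 i hi

lemma mem_relationSpace_finset {F : Finset ι} {c : ι → K} (hc : ∀ i ∉ F, c i = 0) :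
    c ∈ relationSpace K v F ↔ ∑ i ∈ F, c i • v i = 0 := by
  rw [mem_relationSpace, Finset.sum_subset F.subset_univ fun i _ hi => by rw [hc i hi, zero_smul]]
  simpa using fun _ => hc

lemma relationSpace_eq_map (F : Finset ι) :
    relationSpace K v F = (LinearMap.ker (Fintype.linearCombination K fun i : F => v i)).map
      (Function.ExtendByZero.linearMap K Subtype.val) := by
  ext c
  simp only [Submodule.mem_map, LinearMap.mem_ker, Fintype.linearCombination_apply]
  constructor
  · intro hc
    have hsupp : ∀ i ∉ F, c i = 0 := by simpa using (mem_relationSpace.1 hc).1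
    refine ⟨fun i => c i, ?_, funext fun i => ?_⟩
    · rw [← (mem_relationSpace_finset hsupp).1 hc, ← Finset.sum_coe_sort F fun i => c i • v i]
    · by_cases hi : i ∈ F
      · exact Subtype.val_injective.extend_apply (fun i : F => c i) 0 ⟨i, hi⟩
      · rw [Function.ExtendByZero.linearMap_apply, Function.extend_apply' _ _ _ (by simpa using hi),
          Pi.zero_apply, hsupp i hi]
  · rintro ⟨b, hb, rfl⟩
    rw [mem_relationSpace_finset, ← Finset.sum_coe_sort, ← hb]
    · exact Finset.sum_congr rfl fun i _ => by
        rw [Function.ExtendByZero.linearMap_apply, Subtype.val_injective.extend_apply]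
    · exact fun i hi => Function.extend_apply' _ _ _ (by simpa using hi)

lemma finrank_span_add_finrank_relationSpace (F : Finset ι) :
    Module.finrank K (Submodule.span K (v '' F)) + Module.finrank K (relationSpace K v F) =
      F.card := by
  have hinj : Function.Injective
      (Function.ExtendByZero.linearMap K (Subtype.val : F → ι)) := fun b c h => funext fun i => by
    simpa [Subtype.val_injective.extend_apply] using congrFun h i
  have hrange : Submodule.span K (v '' F) =
      LinearMap.range (Fintype.linearCombination K fun i : F => v i) := by
    rw [Fintype.range_linearCombination, Set.image_eq_range]; rfl
  rw [relationSpace_eq_map, hrange,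
    ← LinearEquiv.finrank_eq (Submodule.equivMapOfInjective _ hinj _),
    LinearMap.finrank_range_add_finrank_ker, Module.finrank_fintype_fun_eq_card, Fintype.card_coe]

lemma mem_span_image_diff_singleton_iff {F : Set ι} {f : ι} (hf : f ∈ F) :
    v f ∈ Submodule.span K (v '' (F \ {f})) ↔ ∃ c ∈ relationSpace K v F, c f ≠ 0 := by
  classical
  constructor
  · intro h
    obtain ⟨b, hb, hbf⟩ := (Finsupp.mem_span_image_iff_linearCombination K).1 h
    refine ⟨⇑b - Pi.single f 1, mem_relationSpace.2 ⟨fun i hi => ?_, ?_⟩, ?_⟩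
    · have hbi : b i = 0 := by_contra fun h0 => hi (hb (Finsupp.mem_support_iff.2 h0)).1
      rw [Pi.sub_apply, hbi, Pi.single_eq_of_ne (ne_of_mem_of_not_mem hf hi).symm, sub_zero]
    · rw [Finsupp.linearCombination_apply, Finsupp.sum_fintype _ _ (by simp)] at hbf
      simp [sub_smul, Finset.sum_sub_distrib, hbf, Pi.single_apply, ite_smul]
    · have hbf0 : b f = 0 := by_contra fun h0 => (hb (Finsupp.mem_support_iff.2 h0)).2 rfl
      simp [hbf0]
  · rintro ⟨c, hc, hcf⟩
    obtain ⟨hsupp, hsum⟩ := mem_relationSpace.1 hc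
    rw [← Finset.add_sum_erase _ _ (Finset.mem_univ f), add_eq_zero_iff_eq_neg] at hsum
    rw [← inv_smul_smul₀ hcf (v f), hsum]
    refine Submodule.smul_mem _ _ (Submodule.neg_mem _ (Submodule.sum_mem _ fun i hi => ?_))
    by_cases hiF : i ∈ F
    · exact Submodule.smul_mem _ _
        (Submodule.subset_span ⟨i, ⟨hiF, Finset.ne_of_mem_erase hi⟩, rfl⟩)
    · simp [hsupp i hiF]

end LinearRelations

section GeneralPosition

variable (K : Type*) {M ι : Type*} [DivisionRing K] [AddCommGroup M] [Module K M]

/-- The family `v` is in (linearly) general position: any at most `dim M` of its members are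
linearly independent. -/
def IsInGeneralPosition (v : ι → M) : Prop :=
  ∀ P : Finset ι, P.card ≤ Module.finrank K M → LinearIndepOn K v (P : Set ι)

variable {K} {v : ι → M}

namespace IsInGeneralPosition

lemma span_image_eq_top [FiniteDimensional K M] (hv : IsInGeneralPosition K v) {S : Finset ι}
    (hS : Module.finrank K M ≤ S.card) : Submodule.span K (v '' S) = ⊤ := by
  obtain ⟨P, hPS, hP⟩ := Finset.exists_subset_card_eq hS
  have htop := (hv P hP.le).linearIndependent.span_eq_top_of_card_eq_finrank' (by simpa using hP)
  rw [eq_top_iff, ← htop, ← Set.image_eq_range]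
  exact Submodule.span_mono (Set.image_mono (Finset.coe_subset.2 hPS))

variable [Fintype ι]

lemma relationSpace_eq_bot (hv : IsInGeneralPosition K v) {S : Finset ι}
    (hS : S.card ≤ Module.finrank K M) : relationSpace K v (S : Set ι) = ⊥ := by
  refine (Submodule.eq_bot_iff _).2 fun c hc => funext fun i => ?_
  have hsupp : ∀ i ∉ S, c i = 0 := by simpa using (mem_relationSpace.1 hc).1
  by_cases hi : i ∈ S
  · exact linearIndepOn_finset_iff.1 (hv S hS) c ((mem_relationSpace_finset hsupp).1 hc) i hi
  · exact hsupp i hi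

lemma finrank_relationSpace_add [FiniteDimensional K M] (hv : IsInGeneralPosition K v)
    {S : Finset ι} (hS : Module.finrank K M ≤ S.card) :
    Module.finrank K (relationSpace K v (S : Set ι)) + Module.finrank K M = S.card := by
  rw [← finrank_span_add_finrank_relationSpace (K := K) (v := v) S, hv.span_image_eq_top hS,
    finrank_top, add_comm]

lemma exists_relation_ne_zero [FiniteDimensional K M] (hv : IsInGeneralPosition K v)
    {S : Finset ι} (hS : Module.finrank K M < S.card) {j : ι} (hj : j ∈ S) :
    ∃ c ∈ relationSpace K v (S : Set ι), c j ≠ 0 := by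
  classical
  rw [← mem_span_image_diff_singleton_iff (Finset.mem_coe.2 hj), ← Finset.coe_erase,
    hv.span_image_eq_top (by rw [Finset.card_erase_of_mem hj]; lia)]
  trivial

lemma exists_relationSpace_eq_span_singleton [FiniteDimensional K M]
    (hv : IsInGeneralPosition K v) {X : Finset ι} (hX : X.card = Module.finrank K M + 1) :
    ∃ a : ι → K, (∀ x ∈ X, a x ≠ 0) ∧ relationSpace K v (X : Set ι) = Submodule.span K {a} := by
  have hrank : Module.finrank K (relationSpace K v (X : Set ι)) = 1 := by
    have := hv.finrank_relationSpace_add (S := X) (by lia)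
    lia
  obtain ⟨⟨a, ha⟩, -, hspan⟩ := finrank_eq_one_iff'.1 hrank
  have hmul : ∀ c ∈ relationSpace K v (X : Set ι), ∃ t : K, t • a = c := fun c hc =>
    (hspan ⟨c, hc⟩).imp fun _ ht => congrArg Subtype.val ht
  refine ⟨a, fun x hx hax => ?_,
    le_antisymm (fun c hc => Submodule.mem_span_singleton.2 (hmul c hc))
      ((Submodule.span_singleton_le_iff_mem _ _).2 ha)⟩
  obtain ⟨c, hc, hcx⟩ := hv.exists_relation_ne_zero (by lia) hx
  obtain ⟨t, rfl⟩ := hmul c hc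
  exact hcx (by simp [hax])

end IsInGeneralPosition

end GeneralPosition

section GenericSpecialization

open MvPolynomial in
lemma linearIndependent_aeval_of_linearIndependent_eval {k K σ m n : Type*} [Field k] [CommRing K]
    [IsDomain K] [Algebra k K] [Finite m] [Finite n] {x : σ → K} (hx : AlgebraicIndependent k x)
    (A : Matrix m n (MvPolynomial σ k)) (x₀ : σ → k)
    (h : LinearIndependent k fun i j => eval x₀ (A i j)) :
    LinearIndependent K fun i j => aeval x (A i j) := by
  classical
  cases nonempty_fintype m
  cases nonempty_fintype n
  have hrank : (A.map (eval x₀)).rank = Fintype.card m := h.rank_matrix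
  obtain ⟨B, hB⟩ := Matrix.mulVec_surjective_iff_exists_right_inverse.1 <|
    LinearMap.range_eq_top.1 <| Submodule.eq_top_of_finrank_eq <|
      hrank.trans (Module.finrank_fintype_fun_eq_card k).symm
  set P : Matrix m m (MvPolynomial σ k) := A * (B.map C : Matrix n m (MvPolynomial σ k)) with hP
  have hdet : P.det ≠ 0 := fun h0 => by
    have heval : (eval x₀).mapMatrix P = 1 := by
      rw [← hB, hP, RingHom.mapMatrix_apply, Matrix.map_mul, Matrix.map_map]
      congr 1
      ext i j
      simp
    exact zero_ne_one <| by rw [← map_zero (eval x₀), ← h0, RingHom.map_det, heval, Matrix.det_one]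
  have hdet' : ((aeval x).mapMatrix P).det ≠ 0 := fun h0 =>
    hdet (hx.eq_zero_of_aeval_eq_zero _ (by rw [AlgHom.map_det, h0]))
  refine Fintype.linearIndependent_iff.2 fun c hc i => ?_
  refine congrFun (Matrix.eq_zero_of_vecMul_eq_zero hdet' ?_) i
  have hvec : Matrix.vecMul c (A.map (aeval x)) = 0 := by
    rw [← hc]
    ext j
    simp [Matrix.vecMul, dotProduct]
  rw [hP, AlgHom.mapMatrix_apply, Matrix.map_mul, ← Matrix.vecMul_vecMul, hvec, Matrix.zero_vecMul]

end GenericSpecialization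

section Homogenize

/-- The homogeneous coordinates `(1, x)` of an affine point `x`. -/
def homogenize {R : Type*} [One R] {d : ℕ} (x : Fin d → R) : Fin (d + 1) → R :=
  Fin.cons 1 x

variable {R : Type*} {d : ℕ}

@[simp] lemma homogenize_zero [One R] (x : Fin d → R) : homogenize x 0 = 1 := rfl

@[simp] lemma homogenize_succ [One R] (x : Fin d → R) (i : Fin d) : homogenize x i.succ = x i := rfl

lemma map_homogenize {R' F : Type*} [One R] [One R'] [FunLike F R R'] [OneHomClass F R R'] (φ : F)
    (x : Fin d → R) (i : Fin (d + 1)) : φ (homogenize x i) = homogenize (fun j => φ (x j)) i := by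
  cases i using Fin.cases <;> simp

lemma linearIndependent_homogenize_simplex [Ring R] :
    LinearIndependent R fun j : Fin (d + 1) =>
      homogenize fun i : Fin d => if j = i.succ then (1 : R) else 0 := by
  refine Fintype.linearIndependent_iff.2 fun c hc => ?_
  have hsucc : ∀ i : Fin d, c i.succ = 0 := fun i => by simpa using congrFun hc i.succ
  have hsum := congrFun hc 0
  intro j
  cases j using Fin.cases with
  | zero => simpa [Fin.sum_univ_succ, hsucc] using hsum
  | succ i => exact hsucc i

lemma span_range_homogenize_eq_top [Ring R] :
    Submodule.span R (Set.range (homogenize : (Fin d → R) → Fin (d + 1) → R)) = ⊤ := by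
  have hmem : ∀ x : Fin d → R, homogenize x ∈ Submodule.span R (Set.range homogenize) := fun x =>
    Submodule.subset_span ⟨x, rfl⟩
  rw [eq_top_iff, ← (Pi.basisFun R (Fin (d + 1))).span_eq, Submodule.span_le]
  rintro _ ⟨j, rfl⟩
  rw [Pi.basisFun_apply, SetLike.mem_coe]
  cases j using Fin.cases with
  | zero =>
    convert hmem 0 using 1
    ext i
    cases i using Fin.cases <;> simp
  | succ j =>
    convert Submodule.sub_mem _ (hmem (Pi.single j 1)) (hmem 0) using 1
    ext i
    cases i using Fin.cases <;> simp [Pi.single_apply]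

end Homogenize

section SymProd

variable {R V : Type*}

/-- The symmetric product `u, v ↦ a u * b v + a v * b u` of two vectors, as a bilinear map.
On homogeneous coordinates `symProd h h` is twice the vector of quadratic monomials; on affine
dependences it produces equilibrium stresses. -/
def symProd [CommSemiring R] : (V → R) →ₗ[R] (V → R) →ₗ[R] (Sym2 V → R) :=
  LinearMap.mk₂ R
    (fun a b => Sym2.lift ⟨fun u v => a u * b v + a v * b u, fun _ _ => add_comm _ _⟩)
    (fun a a' b => by ext ⟨u, v⟩; simp; ring) (fun c a b => by ext ⟨u, v⟩; simp; ring)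
    (fun a b b' => by ext ⟨u, v⟩; simp; ring) (fun c a b => by ext ⟨u, v⟩; simp; ring)

@[simp] lemma symProd_apply_mk [CommSemiring R] (a b : V → R) (u v : V) :
    symProd a b s(u, v) = a u * b v + a v * b u := rfl

lemma symProd_comm [CommSemiring R] (a b : V → R) : symProd a b = symProd b a := by
  ext ⟨u, v⟩
  simp only [symProd_apply_mk]
  ring

lemma map_symProd {R' F : Type*} [CommSemiring R] [CommSemiring R'] [FunLike F R R']
    [RingHomClass F R R'] (φ : F) (a b : V → R) (e : Sym2 V) :
    φ (symProd a b e) = symProd (fun u => φ (a u)) (fun u => φ (b u)) e := by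
  induction e with
  | _ u v => simp

lemma symProd_injective [CommRing R] [IsDomain R] [NeZero (2 : R)] {a : V → R} (ha : a ≠ 0) :
    Function.Injective (symProd a) := by
  refine (injective_iff_map_eq_zero _).2 fun b hb => funext fun u => ?_
  obtain ⟨w, hw⟩ := Function.ne_iff.1 ha
  have hbw : b w = 0 := by
    have := congrFun hb s(w, w)
    rw [symProd_apply_mk, ← two_mul] at this
    simpa [NeZero.ne (2 : R), show a w ≠ 0 from hw] using this
  simpa [hbw, show a w ≠ 0 from hw] using congrFun hb s(w, u)

lemma symProd_single_single [CommSemiring R] [DecidableEq V] (u v : V) :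
    symProd (Pi.single u 1 : V → R) (Pi.single v 1) =
      (if u = v then (2 : R) else 1) • Pi.single s(u, v) 1 := by
  ext ⟨x, y⟩
  simp only [symProd_apply_mk, Pi.smul_apply, Pi.single_apply, Sym2.eq_iff, smul_eq_mul]
  split_ifs <;> grind

lemma map₂_symProd_top [Field R] [NeZero (2 : R)] [Finite V] :
    Submodule.map₂ (symProd : (V → R) →ₗ[R] _) ⊤ ⊤ = ⊤ := by
  classical
  cases nonempty_fintype V
  rw [eq_top_iff, ← (Pi.basisFun R (Sym2 V)).span_eq, Submodule.span_le]
  rintro _ ⟨⟨u, v⟩, rfl⟩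
  have hne : (if u = v then (2 : R) else 1) ≠ 0 := by split_ifs <;> exact NeZero.ne _
  rw [Pi.basisFun_apply, SetLike.mem_coe, ← inv_smul_smul₀ hne (Pi.single _ 1)]
  refine Submodule.smul_mem _ _ ?_
  rw [show Quot.mk (Sym2.Rel V) (u, v) = s(u, v) from rfl, ← symProd_single_single]
  exact Submodule.apply_mem_map₂ _ Submodule.mem_top Submodule.mem_top

-- Polarisation stays inside the affine chart: `S((s+t)/2) = (S(s) + 2 S(s,t) + S(t)) / 4`.
lemma span_range_symProd_homogenize_self_eq_top [Field R] [NeZero (2 : R)] {d : ℕ} :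
    Submodule.span R (Set.range fun t : Fin d → R => symProd (homogenize t) (homogenize t)) =
      ⊤ := by
  have h2 : (2 : R) ≠ 0 := NeZero.ne 2
  rw [eq_top_iff, ← map₂_symProd_top, ← span_range_homogenize_eq_top, Submodule.map₂_span_span,
    Submodule.span_le]
  rintro _ ⟨_, ⟨s, rfl⟩, _, ⟨t, rfl⟩, rfl⟩
  have hmid : homogenize ((2 : R)⁻¹ • (s + t)) = (2 : R)⁻¹ • (homogenize s + homogenize t) := by
    ext i
    cases i using Fin.cases
    · simp [one_add_one_eq_two, h2]
    · simp [mul_add]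
  have hmem : ∀ t : Fin d → R, symProd (homogenize t) (homogenize t) ∈
      Submodule.span R (Set.range fun t : Fin d → R => symProd (homogenize t) (homogenize t)) :=
    fun t => Submodule.subset_span ⟨t, rfl⟩
  have hpol : symProd (homogenize s) (homogenize t) =
      (2 : R) • symProd (homogenize ((2 : R)⁻¹ • (s + t))) (homogenize ((2 : R)⁻¹ • (s + t))) -
        (2 : R)⁻¹ • (symProd (homogenize s) (homogenize s) +
          symProd (homogenize t) (homogenize t)) := by
    rw [hmid]
    simp only [map_smul, map_add, LinearMap.smul_apply, LinearMap.add_apply,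
      symProd_comm (homogenize t) (homogenize s)]
    match_scalars <;> field_simp <;> norm_num
  rw [SetLike.mem_coe]
  beta_reduce
  rw [hpol]
  exact Submodule.sub_mem _ (Submodule.smul_mem _ _ (hmem _))
    (Submodule.smul_mem _ _ (Submodule.add_mem _ (hmem _) (hmem _)))

end SymProd

section Quadrics

lemma exists_linearIndependent_eqOn {K M ι : Type*} [DivisionRing K] [AddCommGroup M] [Module K M]
    [FiniteDimensional K M] [Finite ι] {w : ι → M} {s : Set ι} (hw : LinearIndepOn K w s)
    {Q : Set M} (hQ : Submodule.span K Q = ⊤) (hcard : Nat.card ι ≤ Module.finrank K M) :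
    ∃ w' : ι → M, Set.EqOn w' w s ∧ (∀ i ∉ s, w' i ∈ Q) ∧ LinearIndependent K w' := by
  classical
  obtain ⟨B, hBQ, hsB, hspan, hB⟩ := exists_linearIndepOn_id_extension
    hw.id_image (Set.subset_union_left (t := Q))
  have htop : Submodule.span K B = ⊤ := by
    rw [eq_top_iff, ← hQ, Submodule.span_le]
    exact Set.subset_union_right.trans hspan
  have hBcard : B.ncard = Module.finrank K M := by
    have := hB.setFinite.fintype
    rw [← finrank_top K M, ← htop, finrank_span_set_eq_card hB, Set.ncard_eq_toFinset_card']
  have hle : sᶜ.encard ≤ (B \ w '' s).encard := by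
    rw [← sᶜ.toFinite.cast_ncard_eq, ← (hB.setFinite.sdiff (t := w '' s)).cast_ncard_eq,
      Nat.cast_le]
    have hB' := Set.ncard_sdiff_add_ncard_of_subset hsB hB.setFinite
    rw [hw.injOn.ncard_image] at hB'
    have := s.ncard_add_ncard_compl
    lia
  obtain ⟨g, hgB, hg⟩ := sᶜ.toFinite.exists_injOn_of_encard_le hle
  refine ⟨s.piecewise w g, s.piecewise_eqOn w g, fun i hi => ?_, ?_⟩
  · rw [s.piecewise_eq_of_notMem w g hi]
    exact (hBQ (hgB hi).1).resolve_left fun h => (hgB hi).2 h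
  · have hinj : Function.Injective (s.piecewise w g) := (Set.injective_piecewise_iff s).2
      ⟨hw.injOn, hg, fun i hi j hj h => (hgB hj).2 ⟨i, hi, h⟩⟩
    rw [← linearIndepOn_id_range_iff hinj, Set.range_piecewise]
    refine hB.mono (Set.union_subset hsB ?_)
    exact (Set.image_subset_iff.2 hgB).trans Set.sdiff_subset

variable {K U V : Type*}

/-- The quadratic Veronese vectors of the points `a u`, indexed by `some u`, together with the
polarised Veronese vector of the pair `a u₀`, `a u₁`, indexed by `none`. -/
def veroneseWithPair [CommSemiring K] (u₀ u₁ : U) (a : U → V → K) : Option U → Sym2 V → K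
  | none => symProd (a u₀) (a u₁)
  | some u => symProd (a u) (a u)

lemma map_veroneseWithPair {K' F : Type*} [CommSemiring K] [CommSemiring K'] [FunLike F K K']
    [RingHomClass F K K'] (φ : F) (u₀ u₁ : U) (a : U → V → K) (o : Option U) (e : Sym2 V) :
    φ (veroneseWithPair u₀ u₁ a o e) = veroneseWithPair u₀ u₁ (fun u v => φ (a u v)) o e := by
  cases o <;> exact map_symProd φ _ _ e

lemma linearIndependent_symProd_triple [Field K] [NeZero (2 : K)] {a b : V → K}
    (hab : LinearIndependent K ![a, b]) :
    LinearIndependent K ![symProd a b, symProd a a, symProd b b] := by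
  rw [LinearIndependent.pair_iff] at hab
  refine Fintype.linearIndependent_iff.2 fun c hc => ?_
  simp only [Fin.sum_univ_three, Matrix.cons_val] at hc
  have hrow : ∀ u, 2 * c 1 * a u + c 0 * b u = 0 ∧ c 0 * a u + 2 * c 2 * b u = 0 := fun u =>
    hab _ _ <| funext fun v => by
      have huv := congrFun hc s(u, v)
      simp only [Pi.add_apply, Pi.smul_apply, Pi.zero_apply, symProd_apply_mk, smul_eq_mul] at huv ⊢
      linear_combination huv
  obtain ⟨h1, h0⟩ := hab _ _ (funext fun u => (hrow u).1)
  obtain ⟨-, h2⟩ := hab _ _ (funext fun u => (hrow u).2)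
  simp only [mul_eq_zero, NeZero.ne, false_or] at h1 h2
  intro i
  fin_cases i
  exacts [h0, h1, h2]

lemma linearIndependent_homogenize_zero_single [Ring K] {d : ℕ} (i : Fin d) :
    LinearIndependent K ![homogenize (0 : Fin d → K), homogenize (Pi.single i 1)] := by
  refine LinearIndependent.pair_iff.2 fun s t hst => ?_
  have ht : t = 0 := by
    simpa only [Pi.add_apply, Pi.smul_apply, homogenize_succ, Pi.zero_apply, mul_zero, zero_add,
      Pi.single_eq_same, smul_eq_mul, mul_one] using congrFun hst i.succ
  exact ⟨by simpa [ht] using congrFun hst 0, ht⟩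

lemma exists_linearIndependent_veroneseWithPair [Field K] [NeZero (2 : K)] [Fintype U] {d : ℕ}
    {u₀ u₁ : U} (h₀₁ : u₀ ≠ u₁) (hU : Fintype.card U < (d + 2).choose 2) :
    ∃ t : U → Fin d → K,
      LinearIndependent K (veroneseWithPair u₀ u₁ fun u => homogenize (t u)) := by
  classical
  obtain ⟨d, rfl⟩ : ∃ m, d = m + 1 := Nat.exists_eq_succ_of_ne_zero <| by
    rintro rfl
    exact h₀₁ (Fintype.card_le_one_iff.1 (by simpa using hU.le) _ _)
  set t₀ : U → Fin (d + 1) → K := Pi.single u₁ (Pi.single 0 1) with ht₀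
  set T : Set (Option U) := Set.range ![none, some u₀, some u₁]
  have htriple : LinearIndepOn K (veroneseWithPair u₀ u₁ fun u => homogenize (t₀ u)) T := by
    rw [linearIndepOn_range_iff (by
      intro i j; fin_cases i <;> fin_cases j <;> simp [h₀₁, h₀₁.symm])]
    convert linearIndependent_symProd_triple
      (linearIndependent_homogenize_zero_single (K := K) (0 : Fin (d + 1))) using 1
    ext i : 1
    fin_cases i <;> simp [veroneseWithPair, ht₀, h₀₁]
  obtain ⟨w, hw, hwQ, hind⟩ := exists_linearIndependent_eqOn htriple
    span_range_symProd_homogenize_self_eq_top <| by simpa [Sym2.card] using hU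
  choose r hr using hwQ
  refine ⟨fun u => if hu : some u ∈ T then t₀ u else r _ hu, ?_⟩
  suffices h : (veroneseWithPair u₀ u₁ fun u =>
      homogenize (if hu : some u ∈ T then t₀ u else r _ hu)) = w from h ▸ hind
  ext o : 1
  by_cases ho : o ∈ T
  · rw [hw ho]
    rcases o with _ | u
    · have h₀ : some u₀ ∈ T := ⟨1, rfl⟩
      have h₁ : some u₁ ∈ T := ⟨2, rfl⟩
      simp only [veroneseWithPair, dif_pos h₀, dif_pos h₁]
    · simp only [veroneseWithPair, dif_pos ho]
  · rw [← hr o ho]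
    rcases o with _ | u
    · exact absurd ⟨0, rfl⟩ ho
    · simp only [veroneseWithPair, dif_neg ho]

end Quadrics

namespace Generic

variable {U V : Type*} {d : ℕ} {p : V → Fin d → ℝ}

lemma comp (hp : Generic d p) {f : U → V} (hf : Function.Injective f) : Generic d (p ∘ f) :=
  AlgebraicIndependent.comp hp (Prod.map f id) (hf.prodMap Function.injective_id)

lemma injective (hp : Generic d p) (hd : 0 < d) : Function.Injective p := fun v w h =>
  congrArg Prod.fst (AlgebraicIndependent.injective hp (a₁ := (v, ⟨0, hd⟩)) (a₂ := (w, ⟨0, hd⟩))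
    (congrFun h _))

lemma isInGeneralPosition (hp : Generic d p) :
    IsInGeneralPosition ℝ fun v => homogenize (p v) := by
  intro P hP
  obtain ⟨g⟩ : Nonempty (P ↪ Fin (d + 1)) :=
    Function.Embedding.nonempty_of_card_le (by simpa using hP)
  have h := linearIndependent_aeval_of_linearIndependent_eval
    (hp.comp (f := ((↑) : P → V)) Subtype.val_injective)
    (fun v => homogenize fun i => MvPolynomial.X (v, i))
    (fun vi => if g vi.1 = vi.2.succ then 1 else 0)
  simp only [map_homogenize, MvPolynomial.eval_X, MvPolynomial.aeval_X] at h
  exact h (linearIndependent_homogenize_simplex.comp g g.injective)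

lemma linearIndependent_veroneseWithPair [Fintype V] (hp : Generic d p) {u₀ u₁ : V} (h₀₁ : u₀ ≠ u₁)
    (hV : Fintype.card V < (d + 2).choose 2) :
    LinearIndependent ℝ (veroneseWithPair u₀ u₁ fun v => homogenize (p v)) := by
  obtain ⟨t, ht⟩ := exists_linearIndependent_veroneseWithPair (K := ℚ) h₀₁ hV
  have h := linearIndependent_aeval_of_linearIndependent_eval hp
    (veroneseWithPair u₀ u₁ fun v => homogenize fun i => MvPolynomial.X (v, i))
    (fun vi => t vi.1 vi.2)
  simp only [map_veroneseWithPair, map_homogenize, MvPolynomial.eval_X, MvPolynomial.aeval_X] at h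
  exact h ht

lemma eq_zero_of_sum_smul_symProd_eq (hp : Generic d p) {S : Finset V} {u₀ u₁ : V} (hu₀ : u₀ ∈ S)
    (hu₁ : u₁ ∈ S) (h₀₁ : u₀ ≠ u₁) (hS : S.card < (d + 2).choose 2) {l : V → ℝ} {c : ℝ}
    (h : ∑ v ∈ S, l v • symProd (homogenize (p v)) (homogenize (p v)) =
      c • symProd (homogenize (p u₀)) (homogenize (p u₁))) :
    c = 0 ∧ ∀ v ∈ S, l v = 0 := by
  have hS_gen : Generic d (p ∘ ((↑) : S → V)) := hp.comp Subtype.val_injective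
  have hind := hS_gen.linearIndependent_veroneseWithPair
    (u₀ := ⟨u₀, hu₀⟩) (u₁ := ⟨u₁, hu₁⟩) (by simpa using h₀₁) (by simpa using hS)
  have hzero := Fintype.linearIndependent_iff.1 hind
    (fun o => o.elim (-c) fun v => l v) (by
      simp only [Fintype.sum_option, veroneseWithPair, Option.elim, Function.comp_apply, neg_smul]
      rw [Finset.sum_coe_sort S fun v => l v • symProd (homogenize (p v)) (homogenize (p v)), h,
        neg_add_cancel])
  exact ⟨neg_eq_zero.1 (hzero none), fun v hv => hzero (some ⟨v, hv⟩)⟩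

end Generic

section Stress

variable {V : Type*} [Fintype V] [DecidableEq V] (d : ℕ) (p : V → Fin d → ℝ)

/-- The space of equilibrium stresses supported on `F`: the row dependences of the rigidity
matrix. -/
noncomputable abbrev stressSpace (F : Set (Sym2 V)) : Submodule ℝ (Sym2 V → ℝ) :=
  relationSpace ℝ (rigRow d p) F

variable {d p}

lemma sum_smul_rigRow_apply (ω : Sym2 V → ℝ) (w : V) (i : Fin d) :
    (∑ e, ω e • rigRow d p e) (w, i) = ∑ u, ω s(w, u) * (p w i - p u i) := by
  have hinj : Function.Injective fun u : V => s(w, u) := fun _ _ => Sym2.congr_right.1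
  have hw : ∀ u, rigRow d p s(w, u) (w, i) = p w i - p u i := fun u => by
    rcases eq_or_ne w u with rfl | h <;> simp [rigRow, *]
  have hoff : ∀ e ∉ Finset.univ.image fun u : V => s(w, u), rigRow d p e (w, i) = 0 := by
    rintro ⟨u, v⟩ he
    have hu : w ≠ u := fun h => he (Finset.mem_image.2 ⟨v, Finset.mem_univ _, by rw [h]⟩)
    have hv : w ≠ v := fun h => he (Finset.mem_image.2 ⟨u, Finset.mem_univ _, by
      rw [h]; exact Sym2.eq_swap⟩)
    change rigRow d p s(u, v) (w, i) = 0
    simp [rigRow, hu, hv]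
  simp only [Finset.sum_apply, Pi.smul_apply, smul_eq_mul]
  rw [← Finset.sum_subset (Finset.subset_univ _) fun e _ he => by rw [hoff e he, mul_zero],
    Finset.sum_image hinj.injOn]
  simp only [hw]

lemma mem_stressSpace {F : Set (Sym2 V)} {ω : Sym2 V → ℝ} :
    ω ∈ stressSpace d p F ↔ (∀ e ∉ F, ω e = 0) ∧
      ∀ w, ∑ u, ω s(w, u) • homogenize (p u) = (∑ u, ω s(w, u)) • homogenize (p w) := by
  rw [mem_relationSpace]
  refine and_congr_right fun _ => ?_
  have hrow : ∀ w i, (∑ e, ω e • rigRow d p e) (w, i) =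
      (∑ u, ω s(w, u)) * p w i - ∑ u, ω s(w, u) * p u i := fun w i => by
    rw [sum_smul_rigRow_apply, Finset.sum_mul, ← Finset.sum_sub_distrib]
    simp only [mul_sub]
  constructor
  · intro h w
    ext i
    cases i using Fin.cases with
    | zero => simp
    | succ i => simpa using (sub_eq_zero.1 ((hrow w i).symm.trans (congrFun h (w, i)))).symm
  · intro h
    ext ⟨w, i⟩
    simpa [hrow, sub_eq_zero] using (congrFun (h w) i.succ).symm

lemma mem_stressSpace_of_sum_smul_eq {F : Set (Sym2 V)} {ω : Sym2 V → ℝ}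
    (hsupp : ∀ e ∉ F, ω e = 0) (c : V → ℝ)
    (h : ∀ w, ∑ u, ω s(w, u) • homogenize (p u) = c w • homogenize (p w)) :
    ω ∈ stressSpace d p F :=
  mem_stressSpace.2 ⟨hsupp, fun w => by
    have hc : ∑ u, ω s(w, u) = c w := by simpa using congrFun (h w) 0
    rw [h, hc]⟩

lemma finrank_span_insert_eq_iff {K M : Type*} [DivisionRing K] [AddCommGroup M] [Module K M]
    [FiniteDimensional K M] {x : M} {S : Set M} :
    Module.finrank K (Submodule.span K (insert x S)) = Module.finrank K (Submodule.span K S) ↔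
      x ∈ Submodule.span K S := by
  constructor
  · intro h
    rw [Submodule.eq_of_le_of_finrank_eq (Submodule.span_mono (Set.subset_insert x S)) h.symm]
    exact Submodule.subset_span (Set.mem_insert x S)
  · intro h
    rw [Submodule.span_insert_eq_span h]

lemma mem_rcl_iff {F : Set (Sym2 V)} {e : Sym2 V} :
    e ∈ rcl d p F ↔ ¬ e.IsDiag ∧ rigRow d p e ∈ Submodule.span ℝ (rigRow d p '' F) := by
  rw [rcl, Set.mem_ofPred_eq, rrk, rrk, Set.image_insert_eq, finrank_span_insert_eq_iff]

lemma mem_rcl_iff_exists_stress {F : Set (Sym2 V)} {e : Sym2 V} (he : e ∉ F) :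
    e ∈ rcl d p F ↔ ¬ e.IsDiag ∧ ∃ ω ∈ stressSpace d p (insert e F), ω e ≠ 0 := by
  rw [mem_rcl_iff, ← mem_span_image_diff_singleton_iff (Set.mem_insert e F),
    Set.insert_sdiff_self_of_notMem he]

lemma rrk_add_finrank_stressSpace (D : Finset (Sym2 V)) :
    rrk d p D + Module.finrank ℝ (stressSpace d p D) = D.card :=
  finrank_span_add_finrank_relationSpace D

lemma isKFoldCircuit_iff {D : Finset (Sym2 V)} {k : ℕ} :
    IsKFoldCircuit d p D k ↔ (∀ f ∈ D, ∃ ω ∈ stressSpace d p (D : Set (Sym2 V)), ω f ≠ 0) ∧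
      Module.finrank ℝ (stressSpace d p (D : Set (Sym2 V))) = k := by
  rw [IsKFoldCircuit, ← rrk_add_finrank_stressSpace (d := d) (p := p), Nat.add_left_cancel_iff,
    eq_comm (a := k)]
  refine and_congr_left fun _ => forall₂_congr fun f hf => ?_
  rw [← mem_span_image_diff_singleton_iff (Finset.mem_coe.2 hf), eq_comm, rrk, rrk,
    ← finrank_span_insert_eq_iff, ← Set.image_insert_eq, Set.insert_sdiff_self_of_mem hf]

end Stress

section VertexDisjointUnion

variable {V : Type*} [Fintype V] [DecidableEq V] {d : ℕ} {p : V → Fin d → ℝ}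
  {D F G C : Finset (Sym2 V)} {k : ℕ}

lemma mem_esupp {w : V} : w ∈ esupp F ↔ ∃ e ∈ F, w ∈ e := by
  simp [esupp]

lemma esupp_mono (h : F ⊆ G) : esupp F ⊆ esupp G := fun _ hw =>
  mem_esupp.2 ((mem_esupp.1 hw).imp fun _ he => ⟨h he.1, he.2⟩)

lemma esupp_union : esupp (F ∪ G) = esupp F ∪ esupp G := by
  ext w
  simp [mem_esupp, or_and_right, exists_or]

lemma esupp_biUnion {ι : Type*} {s : Finset ι} {C : ι → Finset (Sym2 V)} :
    esupp (s.biUnion C) = s.biUnion fun i => esupp (C i) := by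
  ext w
  simp only [mem_esupp, Finset.mem_biUnion]
  grind

lemma disjoint_of_disjoint_esupp (h : Disjoint (esupp F) (esupp G)) : Disjoint F G :=
  Finset.disjoint_left.2 fun e hF hG => Finset.disjoint_left.1 h
    (mem_esupp.2 ⟨e, hF, Sym2.out_fst_mem e⟩) (mem_esupp.2 ⟨e, hG, Sym2.out_fst_mem e⟩)

lemma indicator_mem_stressSpace (h : Disjoint (esupp F) (esupp G)) {ω : Sym2 V → ℝ}
    (hω : ω ∈ stressSpace d p (F ∪ G : Set (Sym2 V))) :
    (F : Set (Sym2 V)).indicator ω ∈ stressSpace d p (F : Set (Sym2 V)) := by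
  obtain ⟨hsupp, heq⟩ := mem_stressSpace.1 hω
  refine mem_stressSpace.2 ⟨fun e he => Set.indicator_of_notMem he ω, fun w => ?_⟩
  by_cases hw : w ∈ esupp F
  · have hind : ∀ u, (F : Set (Sym2 V)).indicator ω s(w, u) = ω s(w, u) := fun u =>
      Set.indicator_apply_eq_self.2 fun hF => hsupp _ fun hFG => hFG.elim hF fun hG =>
        Finset.disjoint_left.1 h hw (mem_esupp.2 ⟨_, hG, Sym2.mem_mk_left w u⟩)
    simpa only [hind] using heq w
  · have hind : ∀ u, (F : Set (Sym2 V)).indicator ω s(w, u) = 0 := fun u =>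
      Set.indicator_of_notMem (fun hF => hw (mem_esupp.2 ⟨_, hF, Sym2.mem_mk_left w u⟩)) ω
    simp [hind]

lemma stressSpace_union (h : Disjoint (esupp F) (esupp G)) :
    stressSpace d p (F ∪ G : Set (Sym2 V)) =
      stressSpace d p (F : Set (Sym2 V)) ⊔ stressSpace d p (G : Set (Sym2 V)) := by
  refine le_antisymm (fun ω hω => ?_)
    (sup_le (relationSpace_mono Set.subset_union_left) (relationSpace_mono Set.subset_union_right))
  have hdisj : Disjoint (F : Set (Sym2 V)) G :=
    Finset.disjoint_coe.2 (disjoint_of_disjoint_esupp h)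
  have hsum : (F : Set (Sym2 V)).indicator ω + (G : Set (Sym2 V)).indicator ω = ω := by
    refine (Set.indicator_union_of_disjoint hdisj ω).symm.trans ?_
    exact Set.indicator_eq_self.2 fun e he => by_contra fun h => he ((mem_stressSpace.1 hω).1 e h)
  rw [← hsum]
  exact Submodule.add_mem_sup (indicator_mem_stressSpace h hω)
    (indicator_mem_stressSpace h.symm (by rwa [Set.union_comm]))

lemma IsKFoldCircuit.union {l : ℕ} (hF : IsKFoldCircuit d p F k) (hG : IsKFoldCircuit d p G l)
    (h : Disjoint (esupp F) (esupp G)) : IsKFoldCircuit d p (F ∪ G) (k + l) := by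
  rw [isKFoldCircuit_iff] at *
  have hdisj : Disjoint (stressSpace d p (F : Set (Sym2 V))) (stressSpace d p G) :=
    disjoint_relationSpace (Finset.disjoint_coe.2 (disjoint_of_disjoint_esupp h))
  rw [Finset.coe_union]
  refine ⟨fun f hf => ?_, ?_⟩
  · rcases Finset.mem_union.1 hf with hf | hf
    · exact (hF.1 f hf).imp fun _ hω => ⟨relationSpace_mono Set.subset_union_left hω.1, hω.2⟩
    · exact (hG.1 f hf).imp fun _ hω => ⟨relationSpace_mono Set.subset_union_right hω.1, hω.2⟩
  · rw [stressSpace_union h, ← hF.2, ← hG.2, ← Submodule.finrank_sup_add_finrank_inf_eq,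
      hdisj.eq_bot, finrank_bot, add_zero]

lemma mem_rcl_of_mem_rcl_union {e : Sym2 V} (he : e ∈ rcl d p (F ∪ G : Set (Sym2 V)))
    (h : Disjoint (esupp (insert e F)) (esupp G)) : e ∈ rcl d p (F : Set (Sym2 V)) := by
  have hdiag := (mem_rcl_iff.1 he).1
  by_cases heF : e ∈ F
  · exact mem_rcl_iff.2 ⟨hdiag, Submodule.subset_span ⟨e, heF, rfl⟩⟩
  have heG : e ∉ G := Finset.disjoint_left.1 (disjoint_of_disjoint_esupp h)
    (Finset.mem_insert_self e F)
  obtain ⟨ω, hω, hωe⟩ := ((mem_rcl_iff_exists_stress (by simp [heF, heG])).1 he).2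
  rw [← Set.insert_union, ← Finset.coe_insert] at hω
  rw [mem_rcl_iff_exists_stress (by simpa), ← Finset.coe_insert]
  exact ⟨hdiag, _, indicator_mem_stressSpace h hω, by simpa [Set.indicator_of_mem]⟩

lemma Generic.mem_esupp_of_mem_rcl (hp : Generic d p) (hd : 0 < d) {e : Sym2 V}
    (he : e ∈ rcl d p (F : Set (Sym2 V))) {w : V} (hw : w ∈ e) : w ∈ esupp F := by
  by_contra hwF
  obtain ⟨u, rfl⟩ := hw
  have heF : s(w, u) ∉ F := fun h => hwF (mem_esupp.2 ⟨_, h, Sym2.mem_mk_left w u⟩)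
  obtain ⟨hdiag, ω, hω, hωe⟩ := (mem_rcl_iff_exists_stress (by simpa)).1 he
  obtain ⟨hsupp, heq⟩ := mem_stressSpace.1 hω
  have hzero : ∀ x ≠ u, ω s(w, x) = 0 := fun x hx => hsupp _ fun h => h.elim
    (fun h => hx (Sym2.congr_right.1 h)) fun h => hwF (mem_esupp.2 ⟨_, h, Sym2.mem_mk_left w x⟩)
  have hwu : homogenize (p u) = homogenize (p w) := by
    have h := heq w
    rw [Fintype.sum_eq_single u fun x hx => by rw [hzero x hx, zero_smul],
      Fintype.sum_eq_single u hzero] at h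
    exact smul_right_injective _ hωe h
  exact hdiag (hp.injective hd (Fin.cons_injective2 hwu).2).symm

lemma IsPrincipalPart.union_circuit {A : Finset (Sym2 V)} (hA : IsPrincipalPart d p D k A)
    (hk : 0 < k) (hC : IsCircuit d p C) (h : Disjoint (esupp D) (esupp C)) :
    IsPrincipalPart d p (D ∪ C) (k + 1) A := by
  obtain ⟨B, hBD, hB, rfl⟩ := hA
  refine ⟨B ∪ C, Finset.union_subset_union_left hBD, ?_, ?_⟩
  · have := hB.union hC (h.mono_left (esupp_mono hBD))
    rwa [Nat.sub_add_cancel hk] at this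
  · have := Finset.disjoint_left.1 (disjoint_of_disjoint_esupp h)
    grind

/-- A `k`-fold circuit with more than `k` parts for which the intersection of closures in the
definition of balancedness is empty. Unlike failure of balancedness, this property persists under
adding a vertex-disjoint circuit. -/
structure IsStronglyUnbalanced (d : ℕ) {V : Type*} [Fintype V] [DecidableEq V]
    (p : V → Fin d → ℝ) (D : Finset (Sym2 V)) (k : ℕ) : Prop where
  isKFoldCircuit : IsKFoldCircuit d p D k
  pos : 0 < k
  iInter_rcl_eq_empty : ⋂ A ∈ {A | IsPrincipalPart d p D k A}, rcl d p ↑(D \ A) = ∅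
  lt_ncard : k < Set.ncard {A | IsPrincipalPart d p D k A}

namespace IsStronglyUnbalanced

lemma not_isBalanced (hD : IsStronglyUnbalanced d p D k) : ¬ IsBalanced d p D k := by
  rw [IsBalanced, hD.iInter_rcl_eq_empty, rrk, Set.image_empty, Submodule.span_empty, finrank_bot,
    zero_add]
  exact hD.lt_ncard.ne

lemma union_circuit (hD : IsStronglyUnbalanced d p D k) (hp : Generic d p) (hd : 0 < d)
    (hC : IsCircuit d p C) (h : Disjoint (esupp D) (esupp C)) :
    IsStronglyUnbalanced d p (D ∪ C) (k + 1) := by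
  have hdisj : Disjoint D C := disjoint_of_disjoint_esupp h
  have hpart : ∀ A, IsPrincipalPart d p D k A → IsPrincipalPart d p (D ∪ C) (k + 1) A :=
    fun A hA => hA.union_circuit hD.pos hC h
  have hpartC : IsPrincipalPart d p (D ∪ C) (k + 1) C :=
    ⟨D, Finset.subset_union_left, hD.isKFoldCircuit, (Finset.union_sdiff_cancel_left hdisj).symm⟩
  refine ⟨hD.isKFoldCircuit.union hC h, k.succ_pos, ?_, ?_⟩
  · refine Set.eq_empty_of_forall_notMem fun e he => ?_
    simp only [Set.mem_iInter] at he
    have heD : e ∈ rcl d p (D : Set (Sym2 V)) := by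
      simpa [Finset.union_sdiff_cancel_right hdisj] using he C hpartC
    have hvert : ∀ w ∈ e, w ∈ esupp D := fun w => hp.mem_esupp_of_mem_rcl hd heD
    rw [← Set.mem_empty_iff_false e, ← hD.iInter_rcl_eq_empty]
    refine Set.mem_iInter₂.2 fun A hA => mem_rcl_of_mem_rcl_union (G := C) ?_ (h.mono_left ?_)
    · have hAC : (D ∪ C) \ A = D \ A ∪ C := by
        obtain ⟨B, -, -, rfl⟩ := hA
        have := Finset.disjoint_left.1 hdisj
        grind
      rw [← Finset.coe_union, ← hAC]
      exact he A (hpart A hA)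
    · intro w hw
      obtain ⟨f, hf, hwf⟩ := mem_esupp.1 hw
      rcases Finset.mem_insert.1 hf with rfl | hf
      · exact hvert w hwf
      · exact mem_esupp.2 ⟨f, Finset.sdiff_subset hf, hwf⟩
  · have hCD : C ∉ {A | IsPrincipalPart d p D k A} := by
      rintro ⟨B, -, -, hCB⟩
      have hC0 : C = ∅ := by
        rw [← Finset.disjoint_self_iff_empty]
        exact hdisj.mono_left (hCB ▸ Finset.sdiff_subset)
      have := hC.2
      simp [hC0] at this
    calc k + 1 < Set.ncard {A | IsPrincipalPart d p D k A} + 1 := by simpa using hD.lt_ncard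
      _ = Set.ncard (insert C {A | IsPrincipalPart d p D k A}) :=
        (Set.ncard_insert_of_notMem hCD).symm
      _ ≤ _ := Set.ncard_le_ncard (Set.insert_subset hpartC hpart)

lemma union_biUnion (hD : IsStronglyUnbalanced d p D k) (hp : Generic d p) (hd : 0 < d)
    {ι : Type*} {s : Finset ι} {C : ι → Finset (Sym2 V)}
    (hC : ∀ i ∈ s, IsCircuit d p (C i)) (hDC : ∀ i ∈ s, Disjoint (esupp D) (esupp (C i)))
    (hCC : (s : Set ι).PairwiseDisjoint fun i => esupp (C i)) :
    IsStronglyUnbalanced d p (D ∪ s.biUnion C) (k + s.card) := by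
  classical
  induction s using Finset.induction with
  | empty => simpa
  | insert i s his ih =>
    rw [Finset.forall_mem_insert] at hC hDC
    rw [Finset.coe_insert, Set.pairwiseDisjoint_insert_of_notMem (by simpa)] at hCC
    have hdisj : Disjoint (esupp (D ∪ s.biUnion C)) (esupp (C i)) := by
      rw [esupp_union, esupp_biUnion, Finset.disjoint_union_left, Finset.disjoint_biUnion_left]
      exact ⟨hDC.1, fun j hj => (hCC.2 j hj).symm⟩
    have := (ih hC.2 hDC.2 hCC.1).union_circuit hp hd hC.1 hdisj
    rwa [Finset.card_insert_of_notMem his, Finset.biUnion_insert, Finset.union_comm (C i),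
      ← Finset.union_assoc]

end IsStronglyUnbalanced

end VertexDisjointUnion

section CompleteGraph

variable {V : Type*} [DecidableEq V]

/-- The edge set of the complete graph on the vertex set `W`. -/
def cliqueEdges (W : Finset V) : Finset (Sym2 V) := {e ∈ W.sym2 | ¬ e.IsDiag}

lemma mk_mem_cliqueEdges {W : Finset V} {u v : V} :
    s(u, v) ∈ cliqueEdges W ↔ (u ∈ W ∧ v ∈ W) ∧ u ≠ v := by
  simp [cliqueEdges]

variable [Fintype V] {d : ℕ} {p : V → Fin d → ℝ} {W : Finset V}

lemma esupp_cliqueEdges_subset : esupp (cliqueEdges W) ⊆ W := fun w hw => by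
  obtain ⟨_, he, u, rfl⟩ := mem_esupp.1 hw
  exact (mk_mem_cliqueEdges.1 he).1.1

lemma indicator_symProd_self_mem_stressSpace {a : V → ℝ}
    (ha : a ∈ relationSpace ℝ (fun v => homogenize (p v)) (W : Set V)) :
    (cliqueEdges W : Set (Sym2 V)).indicator (symProd a a) ∈
      stressSpace d p (cliqueEdges W : Set (Sym2 V)) := by
  obtain ⟨hsupp, hsum⟩ := mem_relationSpace.1 ha
  refine mem_stressSpace_of_sum_smul_eq (fun e he => Set.indicator_of_notMem he _)
    (fun w => -(symProd a a s(w, w))) fun w => ?_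
  have hoff : ∀ u ≠ w, (cliqueEdges W : Set (Sym2 V)).indicator (symProd a a) s(w, u) =
      symProd a a s(w, u) := fun u hu => by
    refine Set.indicator_apply_eq_self.2 fun h => ?_
    rw [Finset.mem_coe, mk_mem_cliqueEdges, and_iff_left hu.symm, not_and_or] at h
    rcases h with h | h <;> simp [hsupp _ h]
  have hdiag : (cliqueEdges W : Set (Sym2 V)).indicator (symProd a a) s(w, w) = 0 :=
    Set.indicator_of_notMem (by simp [mk_mem_cliqueEdges]) _
  have hfull : ∑ u, symProd a a s(w, u) • homogenize (p u) = 0 := by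
    have h : ∀ u, symProd a a s(w, u) • homogenize (p u) =
        (2 * a w) • a u • homogenize (p u) := fun u => by
      rw [symProd_apply_mk, smul_smul]
      ring_nf
    rw [Finset.sum_congr rfl fun u _ => h u, ← Finset.smul_sum, hsum, smul_zero]
  rw [← Finset.add_sum_erase _ _ (Finset.mem_univ w)] at hfull ⊢
  rw [hdiag, zero_smul, zero_add, neg_smul, ← eq_neg_of_add_eq_zero_right hfull]
  exact Finset.sum_congr rfl fun u hu => by rw [hoff u (Finset.ne_of_mem_erase hu)]

lemma sub_single_mem_relationSpace {ω : Sym2 V → ℝ}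
    (hω : ω ∈ stressSpace d p (cliqueEdges W : Set (Sym2 V))) {w : V} (hw : w ∈ W) :
    (fun u => ω s(w, u)) - Pi.single w (∑ u, ω s(w, u)) ∈
      relationSpace ℝ (fun v => homogenize (p v)) (W : Set V) := by
  obtain ⟨hsupp, heq⟩ := mem_stressSpace.1 hω
  refine mem_relationSpace.2 ⟨fun u hu => ?_, ?_⟩
  · have huW : s(w, u) ∉ cliqueEdges W := fun h => hu (mk_mem_cliqueEdges.1 h).1.2
    rw [Pi.sub_apply, hsupp _ huW, Pi.single_eq_of_ne (ne_of_mem_of_not_mem hw hu).symm, sub_zero]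
  · simp [sub_smul, Finset.sum_sub_distrib, heq, Pi.single_apply, ite_smul]

lemma exists_smul_indicator_symProd_self_eq {a : V → ℝ} (ha : ∀ w ∈ W, a w ≠ 0)
    (hspan : relationSpace ℝ (fun v => homogenize (p v)) (W : Set V) = Submodule.span ℝ {a})
    {ω : Sym2 V → ℝ} (hω : ω ∈ stressSpace d p (cliqueEdges W : Set (Sym2 V))) :
    ∃ c : ℝ, c • (cliqueEdges W : Set (Sym2 V)).indicator (symProd a a) = ω := by
  have hrow : ∀ w ∈ W, ∃ t : ℝ, ∀ u ≠ w, ω s(w, u) = t * a u := fun w hw => by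
    have h := sub_single_mem_relationSpace hω hw
    rw [hspan, Submodule.mem_span_singleton] at h
    exact h.imp fun t ht u hu => by simpa [hu] using (congrFun ht u).symm
  choose! t ht using hrow
  obtain ⟨c, hc⟩ : ∃ c, ∀ w ∈ W, t w = c * a w := by
    rcases W.eq_empty_or_nonempty with rfl | ⟨w₀, hw₀⟩
    · simp
    refine ⟨t w₀ / a w₀, fun w hw => ?_⟩
    have := ha w₀ hw₀
    rcases eq_or_ne w w₀ with rfl | hne
    · field_simp
    · have hsymm : t w * a w₀ = t w₀ * a w := by
        rw [← ht w hw w₀ hne.symm, ← ht w₀ hw₀ w hne, Sym2.eq_swap]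
      field_simp
      exact hsymm
  refine ⟨c / 2, funext fun e => ?_⟩
  rw [Pi.smul_apply]
  by_cases he : e ∈ cliqueEdges W
  · induction e with
    | _ u v =>
      obtain ⟨⟨hu, -⟩, huv⟩ := mk_mem_cliqueEdges.1 he
      rw [Set.indicator_of_mem (Finset.mem_coe.2 he), symProd_apply_mk, ht u hu v huv.symm,
        hc u hu, smul_eq_mul]
      ring
  · rw [Set.indicator_of_notMem (by simpa), (mem_stressSpace.1 hω).1 e (by simpa), smul_zero]

lemma IsInGeneralPosition.isCircuit_cliqueEdges
    (hp : IsInGeneralPosition ℝ fun v => homogenize (p v)) (hW : W.card = d + 2) :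
    IsCircuit d p (cliqueEdges W) := by
  obtain ⟨a, ha, hspan⟩ := hp.exists_relationSpace_eq_span_singleton (X := W) (by simpa)
  set ω₀ := (cliqueEdges W : Set (Sym2 V)).indicator (symProd a a)
  have hω₀ : ω₀ ∈ stressSpace d p (cliqueEdges W : Set (Sym2 V)) :=
    indicator_symProd_self_mem_stressSpace (hspan ▸ Submodule.mem_span_singleton_self a)
  have hne : ∀ e ∈ cliqueEdges W, ω₀ e ≠ 0 := fun e he => by
    induction e with
    | _ u v =>
      obtain ⟨⟨hu, hv⟩, -⟩ := mk_mem_cliqueEdges.1 he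
      have := mul_ne_zero (ha u hu) (ha v hv)
      rw [show ω₀ s(u, v) = symProd a a s(u, v) from Set.indicator_of_mem (Finset.mem_coe.2 he) _,
        symProd_apply_mk, mul_comm (a v), ← two_mul]
      simpa using this
  obtain ⟨u, hu, v, hv, huv⟩ := Finset.one_lt_card.1 (show 1 < W.card by lia)
  have hω₀_ne : ω₀ ≠ 0 := fun h =>
    hne s(u, v) (mk_mem_cliqueEdges.2 ⟨⟨hu, hv⟩, huv⟩) (congrFun h _)
  refine isKFoldCircuit_iff.2 ⟨fun e he => ⟨ω₀, hω₀, hne e he⟩, finrank_eq_one_iff'.2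
    ⟨⟨ω₀, hω₀⟩, by simpa using hω₀_ne, fun ⟨ω, hω⟩ => ?_⟩⟩
  exact (exists_smul_indicator_symProd_self_eq ha hspan hω).imp fun _ hc => Subtype.ext hc

end CompleteGraph

section CompleteBipartiteGraph

variable {V : Type*} [DecidableEq V] {X Y S : Finset V} {x y : V}

/-- The edge set of the complete bipartite graph with sides `X` and `Y`; loops occur if the sides
meet. -/
def bicliqueEdges (X Y : Finset V) : Finset (Sym2 V) := Finset.image₂ (fun x y => s(x, y)) X Y

lemma mk_mem_bicliqueEdges {u v : V} :
    s(u, v) ∈ bicliqueEdges X Y ↔ (u ∈ X ∧ v ∈ Y) ∨ (v ∈ X ∧ u ∈ Y) := by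
  simp only [bicliqueEdges, Finset.mem_image₂, Sym2.eq_iff]
  grind

lemma mk_mem_bicliqueEdges_of_disjoint (hXY : Disjoint X Y) (hx : x ∈ X) :
    s(x, y) ∈ bicliqueEdges X Y ↔ y ∈ Y := by
  simp [mk_mem_bicliqueEdges, hx, Finset.disjoint_left.1 hXY hx]

lemma bicliqueEdges_mono (h : S ⊆ Y) : bicliqueEdges X S ⊆ bicliqueEdges X Y :=
  Finset.image₂_subset_left h

lemma bicliqueEdges_sdiff (hXY : Disjoint X Y) (h : S ⊆ Y) :
    bicliqueEdges X Y \ bicliqueEdges X S = bicliqueEdges X (Y \ S) := by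
  have := Finset.disjoint_left.1 hXY
  ext ⟨u, v⟩
  simp only [Finset.mem_sdiff, mk_mem_bicliqueEdges, Finset.subset_iff] at h ⊢
  grind

lemma bicliqueEdges_singleton_injective (hX : X.Nonempty) :
    Function.Injective fun y => bicliqueEdges X {y} := by
  obtain ⟨x, hx⟩ := hX
  intro y z h
  have hmem : ∀ u, s(u, y) ∈ bicliqueEdges X {y} ↔ s(u, y) ∈ bicliqueEdges X {z} :=
    fun u => by rw [show bicliqueEdges X {y} = bicliqueEdges X {z} from h]
  simp only [mk_mem_bicliqueEdges, Finset.mem_singleton] at hmem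
  grind

variable [Fintype V] {d n : ℕ} {p : V → Fin d → ℝ}

lemma esupp_bicliqueEdges_subset : esupp (bicliqueEdges X Y) ⊆ X ∪ Y := fun w hw => by
  obtain ⟨_, he, u, rfl⟩ := mem_esupp.1 hw
  rcases mk_mem_bicliqueEdges.1 he with h | h
  · exact Finset.mem_union_left _ h.1
  · exact Finset.mem_union_right _ h.2

lemma sum_sum_sub_sum_sum_eq {M : Type*} [AddCommGroup M] (hXY : Disjoint X Y) {x₀ x₁ : V}
    (hx₀ : x₀ ∈ X) (hx₁ : x₁ ∈ X) (h₀₁ : x₀ ≠ x₁) {g : Sym2 V → M}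
    (hg : ∀ e ∉ insert s(x₀, x₁) (bicliqueEdges X Y), g e = 0) :
    ∑ w ∈ X, ∑ u, g s(w, u) - ∑ w ∈ Y, ∑ u, g s(w, u) = 2 • g s(x₀, x₁) := by
  have hXY' := Finset.disjoint_left.1 hXY
  have hvanish : ∀ u v, s(u, v) ≠ s(x₀, x₁) → s(u, v) ∉ bicliqueEdges X Y → g s(u, v) = 0 :=
    fun u v h h' => hg _ (by simp [h, h'])
  simp only [mk_mem_bicliqueEdges, ne_eq, Sym2.eq_iff] at hvanish
  have hsplit : ∀ w, ∑ u, g s(w, u) = ∑ u ∈ X, g s(w, u) + ∑ u ∈ Y, g s(w, u) := fun w => by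
    rw [← Finset.sum_union hXY]
    exact (Finset.sum_subset (Finset.subset_univ _) fun u _ hu =>
      hvanish w u (by grind) (by grind)).symm
  have hYY : ∑ w ∈ Y, ∑ u ∈ Y, g s(w, u) = 0 := Finset.sum_eq_zero fun w hw =>
    Finset.sum_eq_zero fun u hu => hvanish w u (by grind) (by grind)
  have hXX : ∑ w ∈ X, ∑ u ∈ X, g s(w, u) = 2 • g s(x₀, x₁) := by
    rw [← Finset.sum_product', ← Finset.sum_subset (s₁ := {(x₀, x₁), (x₁, x₀)}) (by grind)
      fun w hw hne => hvanish w.1 w.2 (by grind) (by grind), Finset.sum_pair (by grind), two_smul,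
      Sym2.eq_swap (a := x₁)]
  have hcomm : ∑ w ∈ Y, ∑ u ∈ X, g s(w, u) = ∑ w ∈ X, ∑ u ∈ Y, g s(w, u) := by
    rw [Finset.sum_comm]
    simp only [Sym2.eq_swap]
  simp only [hsplit, Finset.sum_add_distrib, hYY, hXX, hcomm, add_zero, add_sub_cancel_right]

lemma sum_smul_symProd_self_sub_eq (hXY : Disjoint X Y) {x₀ x₁ : V} (hx₀ : x₀ ∈ X) (hx₁ : x₁ ∈ X)
    (h₀₁ : x₀ ≠ x₁) {ω : Sym2 V → ℝ}
    (hω : ω ∈ stressSpace d p (insert s(x₀, x₁) (bicliqueEdges X Y) : Set (Sym2 V))) :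
    ∑ w ∈ X, (∑ u, ω s(w, u)) • symProd (homogenize (p w)) (homogenize (p w)) -
        ∑ w ∈ Y, (∑ u, ω s(w, u)) • symProd (homogenize (p w)) (homogenize (p w)) =
      (2 * ω s(x₀, x₁)) • symProd (homogenize (p x₀)) (homogenize (p x₁)) := by
  obtain ⟨hsupp, heq⟩ := mem_stressSpace.1 hω
  have hrow : ∀ w, (∑ u, ω s(w, u)) • symProd (homogenize (p w)) (homogenize (p w)) =
      ∑ u, ω s(w, u) • symProd (homogenize (p w)) (homogenize (p u)) := fun w => by
    rw [← map_smul, ← heq, map_sum]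
    simp only [map_smul]
  have hg := sum_sum_sub_sum_sum_eq hXY hx₀ hx₁ h₀₁ (g := fun e => ω e • Sym2.lift
    ⟨fun u v => symProd (homogenize (p u)) (homogenize (p v)), fun _ _ => symProd_comm _ _⟩ e)
    fun e he => by rw [hsupp e (by simpa using he), zero_smul]
  simpa only [hrow, Sym2.lift_mk, ofNat_smul_eq_nsmul, mul_smul] using hg

lemma Generic.eq_zero_of_mem_stressSpace_insert (hp : Generic d p) (hXY : Disjoint X Y)
    (hcard : X.card + Y.card < (d + 2).choose 2) {x₀ x₁ : V} (hx₀ : x₀ ∈ X) (hx₁ : x₁ ∈ X)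
    (h₀₁ : x₀ ≠ x₁) {ω : Sym2 V → ℝ}
    (hω : ω ∈ stressSpace d p (insert s(x₀, x₁) (bicliqueEdges X Y) : Set (Sym2 V))) :
    ω s(x₀, x₁) = 0 ∧ ∀ w ∈ X ∪ Y, ∑ u, ω s(w, u) = 0 := by
  have hY : ∀ w ∈ Y, w ∉ X := fun w hw => Finset.disjoint_right.1 hXY hw
  have hrel := sum_smul_symProd_self_sub_eq hXY hx₀ hx₁ h₀₁ hω
  obtain ⟨hzero, hsum⟩ := hp.eq_zero_of_sum_smul_symProd_eq (S := X ∪ Y)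
    (l := fun w => if w ∈ X then ∑ u, ω s(w, u) else -∑ u, ω s(w, u))
    (Finset.mem_union_left Y hx₀) (Finset.mem_union_left Y hx₁) h₀₁
    (by rwa [Finset.card_union_of_disjoint hXY]) (by
      rw [← hrel, Finset.sum_union hXY, sub_eq_add_neg, ← Finset.sum_neg_distrib]
      congr 1
      · exact Finset.sum_congr rfl fun w hw => by rw [if_pos hw]
      · exact Finset.sum_congr rfl fun w hw => by rw [if_neg (hY w hw), neg_smul])
  refine ⟨by simpa using hzero, fun w hw => ?_⟩
  have := hsum w hw
  split_ifs at this with hwX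
  · exact this
  · exact neg_eq_zero.1 this

lemma Generic.notMem_rcl_bicliqueEdges (hp : Generic d p) (hXY : Disjoint X Y)
    (hcard : X.card + Y.card < (d + 2).choose 2) {x₀ x₁ : V} (hx₀ : x₀ ∈ X) (hx₁ : x₁ ∈ X) :
    s(x₀, x₁) ∉ rcl d p (bicliqueEdges X Y : Set (Sym2 V)) := fun he => by
  have hnot : s(x₀, x₁) ∉ bicliqueEdges X Y := fun h =>
    Finset.disjoint_left.1 hXY hx₁ ((mk_mem_bicliqueEdges_of_disjoint hXY hx₀).1 h)
  obtain ⟨hdiag, ω, hω, hne⟩ := (mem_rcl_iff_exists_stress (by simpa)).1 he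
  exact hne (hp.eq_zero_of_mem_stressSpace_insert hXY hcard hx₀ hx₁ hdiag hω).1

lemma Generic.iInter_rcl_bicliqueEdges_erase (hp : Generic d p) (hd : 0 < d) (hXY : Disjoint X Y)
    (hY : Y.Nonempty) (hcard : X.card + Y.card < (d + 2).choose 2) :
    ⋂ y ∈ Y, rcl d p (bicliqueEdges X (Y.erase y) : Set (Sym2 V)) = ∅ := by
  refine Set.eq_empty_of_forall_notMem fun e he => ?_
  rw [Set.mem_iInter₂] at he
  obtain ⟨y, hy⟩ := hY
  have hX : ∀ w ∈ e, w ∈ X := fun w hw => by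
    have hmem : ∀ y ∈ Y, w ∈ X ∪ Y.erase y := fun y hy =>
      esupp_bicliqueEdges_subset (hp.mem_esupp_of_mem_rcl hd (he y hy) hw)
    by_cases hwY : w ∈ Y
    · simpa using hmem w hwY
    · simpa [hwY] using hmem y hy
  induction e with
  | _ u v =>
    refine hp.notMem_rcl_bicliqueEdges (hXY.mono_right (Y.erase_subset y)) ?_
      (hX u (Sym2.mem_mk_left u v)) (hX v (Sym2.mem_mk_right u v)) (he y hy)
    exact (Nat.add_le_add_left (Finset.card_le_card (Y.erase_subset y)) _).trans_lt hcard

lemma symProd_mem_stressSpace {a b : V → ℝ}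
    (ha : a ∈ relationSpace ℝ (fun v => homogenize (p v)) (X : Set V))
    (hb : b ∈ relationSpace ℝ (fun v => homogenize (p v)) (Y : Set V)) :
    symProd a b ∈ stressSpace d p (bicliqueEdges X Y : Set (Sym2 V)) := by
  obtain ⟨hasupp, hasum⟩ := mem_relationSpace.1 ha
  obtain ⟨hbsupp, hbsum⟩ := mem_relationSpace.1 hb
  refine mem_stressSpace_of_sum_smul_eq (fun e he => ?_) 0 fun w => ?_
  · induction e with
    | _ u v =>
      simp only [Finset.mem_coe, mk_mem_bicliqueEdges, not_or, not_and_or] at he hasupp hbsupp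
      rcases he with ⟨hu | hu, hv | hv⟩ <;> simp [*]
  · simp [add_smul, mul_smul, Finset.sum_add_distrib, ← Finset.smul_sum, mul_comm _ (b w), hasum,
      hbsum]

lemma Generic.row_mem_relationSpace (hp : Generic d p) (hXY : Disjoint X Y)
    (hcard : X.card + Y.card < (d + 2).choose 2) (hX : 1 < X.card) {ω : Sym2 V → ℝ}
    (hω : ω ∈ stressSpace d p (bicliqueEdges X Y : Set (Sym2 V))) :
    (∀ x ∈ X, (fun u => ω s(x, u)) ∈
      relationSpace ℝ (fun v => homogenize (p v)) (Y : Set V)) ∧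
    ∀ y ∈ Y, (fun u => ω s(y, u)) ∈ relationSpace ℝ (fun v => homogenize (p v)) (X : Set V) := by
  obtain ⟨x₀, hx₀, x₁, hx₁, h₀₁⟩ := Finset.one_lt_card.1 hX
  have hsum := (hp.eq_zero_of_mem_stressSpace_insert hXY hcard hx₀ hx₁ h₀₁
    (relationSpace_mono (Set.subset_insert _ _) hω)).2
  obtain ⟨hsupp, heq⟩ := mem_stressSpace.1 hω
  have hXY' := Finset.disjoint_left.1 hXY
  simp only [mem_relationSpace, heq]
  refine ⟨fun x hx => ⟨fun u hu => hsupp _ ?_, ?_⟩, fun y hy => ⟨fun u hu => hsupp _ ?_, ?_⟩⟩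
  · simp only [Finset.mem_coe, mk_mem_bicliqueEdges] at hu ⊢
    grind
  · rw [hsum x (Finset.mem_union_left Y hx), zero_smul]
  · simp only [Finset.mem_coe, mk_mem_bicliqueEdges] at hu ⊢
    grind
  · rw [hsum y (Finset.mem_union_right X hy), zero_smul]

lemma Generic.stressSpace_bicliqueEdges (hp : Generic d p) (hXY : Disjoint X Y)
    (hcard : X.card + Y.card < (d + 2).choose 2) (hX : 1 < X.card) {a : V → ℝ}
    (ha : ∀ x ∈ X, a x ≠ 0)
    (hspan : relationSpace ℝ (fun v => homogenize (p v)) (X : Set V) = Submodule.span ℝ {a}) :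
    stressSpace d p (bicliqueEdges X Y : Set (Sym2 V)) =
      (relationSpace ℝ (fun v => homogenize (p v)) (Y : Set V)).map (symProd a) := by
  have haX : a ∈ relationSpace ℝ (fun v => homogenize (p v)) (X : Set V) :=
    hspan ▸ Submodule.mem_span_singleton_self a
  have hsupp := (mem_relationSpace.1 haX).1
  refine le_antisymm (fun ω hω => ?_)
    (Submodule.map_le_iff_le_comap.2 fun b hb => symProd_mem_stressSpace haX hb)
  obtain ⟨hrowX, hrowY⟩ := hp.row_mem_relationSpace hXY hcard hX hω
  obtain ⟨x₀, hx₀⟩ := Finset.card_pos.1 (zero_lt_one.trans hX)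
  have hfac : ∀ x, ∀ y ∈ Y, ω s(x, y) = a x * ((a x₀)⁻¹ * ω s(x₀, y)) := fun x y hy => by
    have h := hrowY y hy
    rw [hspan, Submodule.mem_span_singleton] at h
    obtain ⟨t, ht⟩ := h
    have hω_eq : ∀ u, ω s(u, y) = t * a u := fun u => by
      rw [Sym2.eq_swap]
      exact (congrFun ht u).symm
    have := ha x₀ hx₀
    rw [hω_eq, hω_eq]
    field_simp
  have hb := Submodule.smul_mem _ (a x₀)⁻¹ (hrowX x₀ hx₀)
  refine ⟨_, hb, funext fun e => ?_⟩
  by_cases he : e ∈ bicliqueEdges X Y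
  · obtain ⟨x, -, y, hy, rfl⟩ := Finset.mem_image₂.1 he
    simp [hfac x y hy, hsupp y (Finset.disjoint_right.1 hXY hy)]
  · rw [(mem_stressSpace.1 hω).1 e he]
    exact (mem_stressSpace.1 (symProd_mem_stressSpace haX hb)).1 e he

end CompleteBipartiteGraph

section PrincipalPartition

variable {V : Type*} [Fintype V] [DecidableEq V] {X Y : Finset V} {d n : ℕ} {p : V → Fin d → ℝ}

namespace Generic

lemma exists_stressSpace_bicliqueEdges_eq_map (hp : Generic d p) (hXY : Disjoint X Y)
    (hX : X.card = d + 2) (hcard : X.card + Y.card < (d + 2).choose 2) :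
    ∃ a : V → ℝ, (∀ v, a v ≠ 0 ↔ v ∈ X) ∧ stressSpace d p (bicliqueEdges X Y : Set (Sym2 V)) =
      (relationSpace ℝ (fun v => homogenize (p v)) (Y : Set V)).map (symProd a) := by
  obtain ⟨a, ha, hspan⟩ :=
    hp.isInGeneralPosition.exists_relationSpace_eq_span_singleton (X := X) (by simpa)
  have hsupp := (mem_relationSpace.1 (hspan ▸ Submodule.mem_span_singleton_self a)).1
  exact ⟨a, fun v => ⟨Not.imp_symm (hsupp v), ha v⟩,
    hp.stressSpace_bicliqueEdges hXY hcard (by lia) ha hspan⟩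

lemma finrank_stressSpace_bicliqueEdges (hp : Generic d p) (hXY : Disjoint X Y)
    (hX : X.card = d + 2) (hcard : X.card + Y.card < (d + 2).choose 2) :
    Module.finrank ℝ (stressSpace d p (bicliqueEdges X Y : Set (Sym2 V))) =
      Module.finrank ℝ (relationSpace ℝ (fun v => homogenize (p v)) (Y : Set V)) := by
  obtain ⟨a, ha, hstress⟩ := hp.exists_stressSpace_bicliqueEdges_eq_map hXY hX hcard
  obtain ⟨x, hx⟩ := Finset.card_pos.1 (show 0 < X.card by lia)
  have ha0 : a ≠ 0 := fun h => (ha x).2 hx (congrFun h x)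
  rw [hstress]
  exact (Submodule.equivMapOfInjective _ (symProd_injective ha0) _).finrank_eq.symm

lemma isKFoldCircuit_bicliqueEdges (hp : Generic d p) (hXY : Disjoint X Y) (hX : X.card = d + 2)
    (hcard : X.card + Y.card < (d + 2).choose 2) (hn : 0 < n) (hY : Y.card = n + (d + 1)) :
    IsKFoldCircuit d p (bicliqueEdges X Y) n := by
  have hdim : Module.finrank ℝ (Fin (d + 1) → ℝ) < Y.card := by
    rw [Module.finrank_fin_fun]
    lia
  refine isKFoldCircuit_iff.2 ⟨fun f hf => ?_, ?_⟩
  · obtain ⟨a, ha, hstress⟩ := hp.exists_stressSpace_bicliqueEdges_eq_map hXY hX hcard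
    obtain ⟨x, hx, y, hy, rfl⟩ := Finset.mem_image₂.1 hf
    obtain ⟨b, hb, hby⟩ := hp.isInGeneralPosition.exists_relation_ne_zero hdim hy
    have hay : a y = 0 := not_ne_iff.1 fun h => Finset.disjoint_left.1 hXY ((ha y).1 h) hy
    exact ⟨symProd a b, hstress ▸ Submodule.mem_map_of_mem hb, by simp [hay, hby, (ha x).2 hx]⟩
  · have hrank := hp.isInGeneralPosition.finrank_relationSpace_add hdim.le
    rw [← hp.finrank_stressSpace_bicliqueEdges hXY hX hcard, Module.finrank_fin_fun] at hrank
    lia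

lemma star_subset_of_isKFoldCircuit (hp : Generic d p) (hXY : Disjoint X Y)
    (hX : X.card = d + 2) (hcard : X.card + Y.card < (d + 2).choose 2)
    {B : Finset (Sym2 V)} (hBXY : B ⊆ bicliqueEdges X Y) (hB : IsKFoldCircuit d p B n)
    {x y : V} (hy : y ∈ Y) (hxy : s(x, y) ∈ B) : bicliqueEdges X {y} ⊆ B := by
  obtain ⟨a, ha, hstress⟩ := hp.exists_stressSpace_bicliqueEdges_eq_map hXY hX hcard
  obtain ⟨ω, hω, hne⟩ := (isKFoldCircuit_iff.1 hB).1 _ hxy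
  obtain ⟨b, -, rfl⟩ := hstress.le (relationSpace_mono (Finset.coe_subset.2 hBXY) hω)
  have hay : a y = 0 := not_ne_iff.1 fun h => Finset.disjoint_left.1 hXY ((ha y).1 h) hy
  have hval : ∀ v, symProd a b s(v, y) = a v * b y := fun v => by simp [hay]
  have hby : b y ≠ 0 := right_ne_zero_of_mul (hval x ▸ hne)
  intro e he
  obtain ⟨v, hv, z, hz, rfl⟩ := Finset.mem_image₂.1 he
  obtain rfl := Finset.mem_singleton.1 hz
  refine by_contra fun h => mul_ne_zero ((ha v).2 hv) hby ?_
  rw [← hval, (mem_stressSpace.1 hω).1 _ h]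

lemma exists_eq_bicliqueEdges_of_isKFoldCircuit (hp : Generic d p) (hXY : Disjoint X Y)
    (hX : X.card = d + 2) (hcard : X.card + Y.card < (d + 2).choose 2) (hn : 0 < n)
    {B : Finset (Sym2 V)} (hBXY : B ⊆ bicliqueEdges X Y) (hB : IsKFoldCircuit d p B n) :
    ∃ S ⊆ Y, S.card = n + (d + 1) ∧ B = bicliqueEdges X S := by
  obtain ⟨S, hSY, rfl⟩ : ∃ S ⊆ Y, B = bicliqueEdges X S := by
    refine ⟨{y ∈ Y | bicliqueEdges X {y} ⊆ B}, Finset.filter_subset _ _,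
      Finset.Subset.antisymm (fun e he => ?_) fun e he => ?_⟩
    · obtain ⟨x, hx, y, hy, rfl⟩ := Finset.mem_image₂.1 (hBXY he)
      exact Finset.mem_image₂_of_mem hx (Finset.mem_filter.2
        ⟨hy, hp.star_subset_of_isKFoldCircuit hXY hX hcard hBXY hB hy he⟩)
    · obtain ⟨x, hx, y, hy, rfl⟩ := Finset.mem_image₂.1 he
      exact (Finset.mem_filter.1 hy).2
        (Finset.mem_image₂_of_mem hx (Finset.mem_singleton_self y))
  have hrank := hp.finrank_stressSpace_bicliqueEdges (hXY.mono_right hSY) hX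
    ((Nat.add_le_add_left (Finset.card_le_card hSY) _).trans_lt hcard)
  rw [(isKFoldCircuit_iff.1 hB).2] at hrank
  refine ⟨S, hSY, ?_, rfl⟩
  rcases le_total S.card (d + 1) with hS | hS
  · rw [hp.isInGeneralPosition.relationSpace_eq_bot (by simpa), finrank_bot] at hrank
    lia
  · rw [← hp.isInGeneralPosition.finrank_relationSpace_add (by simpa), ← hrank,
      Module.finrank_fin_fun]

lemma isPrincipalPart_bicliqueEdges_iff (hp : Generic d p) (hXY : Disjoint X Y)
    (hX : X.card = d + 2) (hcard : X.card + Y.card < (d + 2).choose 2) (hn : 1 < n)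
    (hY : Y.card = n + (d + 1)) {A : Finset (Sym2 V)} :
    IsPrincipalPart d p (bicliqueEdges X Y) n A ↔ ∃ y ∈ Y, A = bicliqueEdges X {y} := by
  have hn' : 0 < n - 1 := by lia
  constructor
  · rintro ⟨B, hB, hcirc, rfl⟩
    obtain ⟨S, hSY, hS, rfl⟩ :=
      hp.exists_eq_bicliqueEdges_of_isKFoldCircuit hXY hX hcard hn' hB hcirc
    obtain ⟨y, hy⟩ := Finset.card_eq_one.1 (show (Y \ S).card = 1 by
      rw [Finset.card_sdiff_of_subset hSY]; lia)
    refine ⟨y, Finset.sdiff_subset (hy ▸ Finset.mem_singleton_self y), ?_⟩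
    rw [bicliqueEdges_sdiff hXY hSY, hy]
  · rintro ⟨y, hy, rfl⟩
    have hYy := Y.erase_subset y
    refine ⟨bicliqueEdges X (Y.erase y), bicliqueEdges_mono hYy,
      hp.isKFoldCircuit_bicliqueEdges (hXY.mono_right hYy) hX
        ((Nat.add_le_add_left (Finset.card_le_card hYy) _).trans_lt hcard) hn' ?_, ?_⟩
    · rw [Finset.card_erase_of_mem hy]
      lia
    · rw [bicliqueEdges_sdiff hXY hYy, Finset.sdiff_erase_self hy]

lemma isStronglyUnbalanced_bicliqueEdges (hp : Generic d p) (hXY : Disjoint X Y)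
    (hX : X.card = d + 2) (hcard : X.card + Y.card < (d + 2).choose 2) (hn : 1 < n)
    (hY : Y.card = n + (d + 1)) : IsStronglyUnbalanced d p (bicliqueEdges X Y) n := by
  have hd : 0 < d := Nat.pos_of_ne_zero (by rintro rfl; simp at hcard; lia)
  have hXne : X.Nonempty := Finset.card_pos.1 (by lia)
  have hYne : Y.Nonempty := Finset.card_pos.1 (by lia)
  have hparts : {A | IsPrincipalPart d p (bicliqueEdges X Y) n A} =
      (fun y => bicliqueEdges X {y}) '' Y := by
    ext A
    simp [hp.isPrincipalPart_bicliqueEdges_iff hXY hX hcard hn hY, eq_comm]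
  refine ⟨hp.isKFoldCircuit_bicliqueEdges hXY hX hcard (by lia) hY, by lia, ?_, ?_⟩
  · rw [hparts, Set.biInter_image, ← hp.iInter_rcl_bicliqueEdges_erase hd hXY hYne hcard]
    refine Set.iInter₂_congr fun y hy => ?_
    rw [bicliqueEdges_sdiff hXY (by simpa using hy), Finset.sdiff_singleton_eq_erase]
  · rw [hparts, Set.ncard_image_of_injective _ (bicliqueEdges_singleton_injective hXne),
      Set.ncard_coe_finset]
    lia

end Generic

end PrincipalPartition

section Example

variable {d k : ℕ}

/-- The side of `K_{d+2,d+3}` with `d + 2` vertices. -/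
abbrev smallSide (d k : ℕ) : Finset (BipV d k) := Finset.univ.image (xv d k)

/-- The side of `K_{d+2,d+3}` with `d + 3` vertices. -/
abbrev largeSide (d k : ℕ) : Finset (BipV d k) := Finset.univ.image (yv d k)

/-- The vertex set of the `c`-th copy of `K_{d+2}`. -/
abbrev cliqueVerts (d k : ℕ) (c : Fin (k - 2)) : Finset (BipV d k) := Finset.univ.image (zv d k c)

lemma card_smallSide : (smallSide d k).card = d + 2 := by
  rw [Finset.card_image_of_injective _ fun _ _ h => by simpa [xv] using h, Finset.card_fin]

lemma card_largeSide : (largeSide d k).card = 2 + (d + 1) := by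
  rw [Finset.card_image_of_injective _ fun _ _ h => by simpa [yv] using h, Finset.card_fin]
  lia

lemma card_cliqueVerts (c : Fin (k - 2)) : (cliqueVerts d k c).card = d + 2 := by
  rw [Finset.card_image_of_injective _ fun _ _ h => by simpa [zv] using h, Finset.card_fin]

lemma disjoint_smallSide_largeSide : Disjoint (smallSide d k) (largeSide d k) := by
  simp [Finset.disjoint_left, xv, yv]

lemma disjoint_sides_cliqueVerts (c : Fin (k - 2)) :
    Disjoint (smallSide d k ∪ largeSide d k) (cliqueVerts d k c) := by
  simp [Finset.disjoint_left, xv, yv, zv]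

lemma pairwise_disjoint_cliqueVerts : Pairwise (Function.onFun Disjoint (cliqueVerts d k)) :=
  fun b c hbc => by simp [Function.onFun, Finset.disjoint_left, zv, hbc.symm]

lemma card_sides_lt (hd : 4 ≤ d) :
    (smallSide d k).card + (largeSide d k).card < (d + 2).choose 2 := by
  rw [card_smallSide, card_largeSide]
  induction d, hd using Nat.le_induction with
  | base => decide
  | succ d hd ih =>
    rw [Nat.choose_succ_succ' (d + 2) 1, Nat.choose_one_right]
    lia

lemma bipEdges_eq : bipEdges d k = bicliqueEdges (smallSide d k) (largeSide d k) := by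
  ext e
  simp [bipEdges, bicliqueEdges]

lemma starAt_eq (j : Fin (d + 3)) : starAt d k j = bicliqueEdges (smallSide d k) {yv d k j} := by
  ext e
  simp [starAt, bicliqueEdges]

lemma cliqueEdgesZ_eq :
    cliqueEdgesZ d k = Finset.univ.biUnion fun c => cliqueEdges (cliqueVerts d k c) := by
  ext ⟨u, v⟩
  simp only [cliqueEdgesZ, mk_mem_cliqueEdges, Finset.mem_image, Finset.mem_filter,
    Finset.mem_univ, true_and, Finset.mem_biUnion, Prod.exists, Sym2.eq_iff]
  constructor
  · rintro ⟨c, a, b, hab, ⟨rfl, rfl⟩ | ⟨rfl, rfl⟩⟩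
    · exact ⟨c, ⟨⟨a, rfl⟩, b, rfl⟩, by simpa [zv] using hab⟩
    · exact ⟨c, ⟨⟨b, rfl⟩, a, rfl⟩, by simpa [zv] using Ne.symm hab⟩
  · rintro ⟨c, ⟨⟨a, rfl⟩, b, rfl⟩, hab⟩
    exact ⟨c, a, b, fun h => hab (congrArg _ h), Or.inl ⟨rfl, rfl⟩⟩

namespace Generic

variable {p : BipV d k → Fin d → ℝ}

lemma isPrincipalPart_bipEdges_iff (hp : Generic d p) (hd : 4 ≤ d) {A : Finset (Sym2 (BipV d k))} :
    IsPrincipalPart d p (bipEdges d k) 2 A ↔ ∃ j, A = starAt d k j := by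
  rw [bipEdges_eq, hp.isPrincipalPart_bicliqueEdges_iff disjoint_smallSide_largeSide card_smallSide
    (card_sides_lt hd) one_lt_two card_largeSide]
  simp [starAt_eq]

lemma isStronglyUnbalanced_bipEdges (hp : Generic d p) (hd : 4 ≤ d) :
    IsStronglyUnbalanced d p (bipEdges d k) 2 := by
  rw [bipEdges_eq]
  exact hp.isStronglyUnbalanced_bicliqueEdges disjoint_smallSide_largeSide card_smallSide
    (card_sides_lt hd) one_lt_two card_largeSide

lemma isStronglyUnbalanced_bipEdges_union_cliqueEdgesZ (hp : Generic d p) (hd : 4 ≤ d) :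
    IsStronglyUnbalanced d p (bipEdges d k ∪ cliqueEdgesZ d k) (2 + (k - 2)) := by
  rw [cliqueEdgesZ_eq]
  have h := (hp.isStronglyUnbalanced_bipEdges hd).union_biUnion hp (by lia) (s := Finset.univ)
    (C := fun c => cliqueEdges (cliqueVerts d k c))
    (fun c _ => hp.isInGeneralPosition.isCircuit_cliqueEdges (card_cliqueVerts c))
    (fun c _ => (disjoint_sides_cliqueVerts c).mono
      (bipEdges_eq (d := d) ▸ esupp_bicliqueEdges_subset) esupp_cliqueEdges_subset)
    fun b _ c _ hbc => (pairwise_disjoint_cliqueVerts hbc).mono esupp_cliqueEdges_subset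
      esupp_cliqueEdges_subset
  rwa [Finset.card_fin] at h

end Generic

end Example

/-- Theorem 3.3: `R_d` does not have the `k`-fold circuit property for `d ≥ 4`, `k ≥ 2`:
`K_{d+2,d+3}` is a double `R_d`-circuit whose principal partition is `{A_1, …, A_{d+3}}`,
with `r_d(⋂ cl_d(D \ A_i)) = 0`, so it is not balanced; and adding `k-2` disjoint copies
of `K_{d+2}` produces an unbalanced `k`-fold `R_d`-circuit. -/
theorem Rd_not_kfold_circuit_property (d k : ℕ) (hd : 4 ≤ d) (hk : 2 ≤ k)
    (p : BipV d k → Fin d → ℝ) (hp : Generic d p) :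
    IsKFoldCircuit d p (bipEdges d k) 2 ∧
    (∀ A : Finset (Sym2 (BipV d k)),
        IsPrincipalPart d p (bipEdges d k) 2 A ↔ ∃ j : Fin (d+3), A = starAt d k j) ∧
    rrk d p (⋂ j : Fin (d+3), rcl d p ↑(bipEdges d k \ starAt d k j)) = 0 ∧
    ¬ IsBalanced d p (bipEdges d k) 2 ∧
    IsKFoldCircuit d p (bipEdges d k ∪ cliqueEdgesZ d k) k ∧
    ¬ IsBalanced d p (bipEdges d k ∪ cliqueEdgesZ d k) k := by
  have hD := hp.isStronglyUnbalanced_bipEdges hd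
  have hparts : ∀ A, IsPrincipalPart d p (bipEdges d k) 2 A ↔ ∃ j, A = starAt d k j :=
    fun _ => hp.isPrincipalPart_bipEdges_iff hd
  have hinter : ⋂ j, rcl d p (bipEdges d k \ starAt d k j : Finset (Sym2 (BipV d k))) = ∅ := by
    rw [← hD.iInter_rcl_eq_empty]
    simp [hparts, Set.iInter_exists, Set.iInter_comm]
  have hDC := hp.isStronglyUnbalanced_bipEdges_union_cliqueEdgesZ hd
  rw [Nat.add_sub_cancel' hk] at hDC
  refine ⟨hD.isKFoldCircuit, hparts, ?_, hD.not_isBalanced, hDC.isKFoldCircuit, hDC.not_isBalanced⟩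
  rw [hinter, rrk, Set.image_empty, Submodule.span_empty, finrank_bot]
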